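/- arXiv:math/0310364 — 4 statements merged into one kernel-verified Lean document; each statement's English description precedes it below -/
import Mathlib

section
/- Let s be a complex number with Re(s) > 1/2. Then the limit lim_{ε→0⁺} [ 2(2s−1) ∫₀^{1/ε} ( ∑_{k=1}^∞ g_s(1 + k²/(4y²)) ) y^{-2} dy + log ε ] exists and equals −log 2 − Ψ(s + 1/2) + 1/(2s−1). (This is Proposition 2.4 of the paper: the regularized trace Φ_H(s) of the resolvent of the Laplacian on the parabolic cylinder (horn) H = Γ_∞\ℍ equals −log 2 − Ψ(s+1/2) + 1/(2s−1).) -/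
open MeasureTheory

/-- The Green's function of the resolvent `(Δ_ℍ - s(1-s))⁻¹` on the hyperbolic plane,
expressed in the point-pair invariant `σ = cosh²(d(z,z')/2)`, via Euler's integral
representation: `g_s(σ) = (1/(4π)) ∫₀¹ t^(s-1) (1-t)^(s-1) (σ-t)^(-s) dt`. -/
noncomputable def greenH (s : ℂ) (σ : ℝ) : ℂ :=
  (1 / (4 * (Real.pi : ℂ))) * ∫ t in Set.Ioo (0:ℝ) 1,
    (t : ℂ) ^ (s - 1) * ((1 : ℂ) - (t : ℂ)) ^ (s - 1) * ((σ : ℂ) - (t : ℂ)) ^ (-s)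

/-- The digamma function `Ψ(z) = Γ'(z)/Γ(z)`. -/
noncomputable def digamma (z : ℂ) : ℂ := deriv Complex.Gamma z / Complex.Gamma z

section HornAux

open Set Filter Topology

lemma image_div_one_sub : (fun x : ℝ => x / (1 - x)) '' Ioo 0 1 = Ioi 0 := by
  ext v
  simp only [mem_image, mem_Ioo, mem_Ioi]
  constructor
  · rintro ⟨x, ⟨h0, h1⟩, rfl⟩
    exact div_pos h0 (by linarith)
  · intro hv
    refine ⟨v / (1 + v), ⟨by positivity, ?_⟩, ?_⟩
    · rw [div_lt_one (by positivity)]; linarith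
    · have : (1 + v) ≠ 0 := by positivity
      field_simp
      ring

lemma mel1 {p s : ℂ} (hp : 0 < p.re) (hps : p.re < s.re) :
    HasMellin (fun v : ℝ => ((1 + v : ℝ) : ℂ) ^ (-s)) p (Complex.betaIntegral p (s - p)) := by
  have hd : ∀ x ∈ Ioo (0:ℝ) 1,
      HasDerivWithinAt (fun x : ℝ => x / (1 - x)) (1 / (1 - x) ^ 2) (Ioo 0 1) x := by
    intro x hx
    have h1 : (1 - x) ≠ 0 := by linarith [hx.2]
    have := ((hasDerivAt_id x).div ((hasDerivAt_id x).const_sub 1) h1)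
    refine HasDerivAt.hasDerivWithinAt ?_
    convert! this using 1
    simp
  have hinj : InjOn (fun x : ℝ => x / (1 - x)) (Ioo 0 1) := by
    intro x hx y hy h
    have h1 : (1 - x) ≠ 0 := by linarith [hx.2]
    have h2 : (1 - y) ≠ 0 := by linarith [hy.2]
    simp only at h
    field_simp at h
    linarith
  have hcongr : ∀ x ∈ Ioo (0:ℝ) 1, |1 / (1 - x) ^ 2| •
      (((x / (1 - x) : ℝ) : ℂ) ^ (p - 1) • ((1 + x / (1 - x) : ℝ) : ℂ) ^ (-s)) =
      (x : ℂ) ^ (p - 1) * (1 - (x : ℂ)) ^ ((s - p) - 1) := by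
    intro x hx
    have h1 : 0 < 1 - x := by linarith [hx.2]
    have h1' : ((1 - x : ℝ) : ℂ) ≠ 0 := by exact_mod_cast h1.ne'
    have e1 : 1 + x / (1 - x) = (1 - x)⁻¹ := by field_simp; ring
    have e2 : (1 : ℂ) - x = ((1 - x : ℝ) : ℂ) := by push_cast; ring
    rw [e1, e2, abs_of_pos (by positivity), div_eq_mul_inv x, Complex.ofReal_mul,
      Complex.mul_cpow_ofReal_nonneg hx.1.le (by positivity), Complex.ofReal_inv,
      Complex.inv_cpow, Complex.inv_cpow, ← Complex.cpow_neg, ← Complex.cpow_neg,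
      Complex.real_smul, smul_eq_mul]
    · have e3 : ((1 / (1 - x) ^ 2 : ℝ) : ℂ) = ((1 - x : ℝ) : ℂ) ^ (-2 : ℂ) := by
        rw [Complex.cpow_neg]
        have : ((1 - x : ℝ) : ℂ) ^ (2 : ℂ) = ((1 - x : ℝ) : ℂ) ^ (2 : ℕ) := by
          exact_mod_cast Complex.cpow_natCast ((1 - x : ℝ) : ℂ) 2
        rw [this]; push_cast; simp
      rw [e3]
      have e4 : s - p - 1 = -2 + -(p - 1) + -(-s) := by ring
      rw [e4, Complex.cpow_add _ _ h1', Complex.cpow_add _ _ h1']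
      ring
    all_goals
      rw [Complex.arg_ofReal_of_nonneg h1.le]
      exact Real.pi_pos.ne
  have hI := Complex.betaIntegral_convergent (u := p) (v := s - p) hp (by simpa using hps)
  rw [intervalIntegrable_iff_integrableOn_Ioo_of_le zero_le_one] at hI
  constructor
  · unfold MellinConvergent
    rw [← image_div_one_sub, integrableOn_image_iff_integrableOn_abs_deriv_smul measurableSet_Ioo hd hinj]
    exact hI.congr_fun (fun x hx => (hcongr x hx).symm) measurableSet_Ioo
  · unfold mellin Complex.betaIntegral
    rw [← image_div_one_sub, integral_image_eq_integral_abs_deriv_smul measurableSet_Ioo hd hinj,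
      intervalIntegral.integral_of_le zero_le_one, integral_Ioc_eq_integral_Ioo]
    exact setIntegral_congr_fun measurableSet_Ioo hcongr

lemma hasMellin_congr {f g : ℝ → ℂ} {z m : ℂ} (h : HasMellin f z m)
    (hfg : ∀ u ∈ Ioi (0:ℝ), f u = g u) : HasMellin g z m := by
  have hc : ∀ u ∈ Ioi (0:ℝ), (u : ℂ) ^ (z - 1) • f u = (u : ℂ) ^ (z - 1) • g u := by
    intro u hu; rw [hfg u hu]
  refine ⟨h.1.congr_fun hc measurableSet_Ioi, ?_⟩
  rw [← h.2]
  exact (setIntegral_congr_fun measurableSet_Ioi hc).symm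

lemma mel2 {z s : ℂ} (hp : 0 < z.re) (hps : z.re < 2 * s.re) {a : ℝ} (ha : 0 < a) :
    HasMellin (fun u : ℝ => ((a + u ^ 2 : ℝ) : ℂ) ^ (-s)) z
      ((a : ℂ) ^ (z / 2 - s) * (Complex.betaIntegral (z / 2) (s - z / 2) / 2)) := by
  have ha' : (a : ℂ) ≠ 0 := by exact_mod_cast ha.ne'
  have hz2 : (z / 2).re = z.re / 2 := by simp
  have h1 := mel1 (p := z / 2) (s := s) (by rw [hz2]; linarith) (by rw [hz2]; linarith)
  set f : ℝ → ℂ := fun v : ℝ => ((1 + v : ℝ) : ℂ) ^ (-s) with hf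
  have hc : 0 < a ^ (-(1/2) : ℝ) := by positivity
  have key : HasMellin (fun u => (a : ℂ) ^ (-s) • f ((a ^ (-(1/2) : ℝ) * u) ^ (2 : ℝ))) z
      ((a : ℂ) ^ (-s) • (((a ^ (-(1/2) : ℝ) : ℝ) : ℂ) ^ (-z) •
        (|(2:ℝ)|⁻¹ • Complex.betaIntegral (z / 2) (s - z / 2)))) := by
    constructor
    · apply MellinConvergent.const_smul
      rw [MellinConvergent.comp_mul_left (f := fun u => f (u ^ (2:ℝ))) hc,
        MellinConvergent.comp_rpow two_ne_zero]
      simpa using h1.1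
    · rw [mellin_const_smul, mellin_comp_mul_left (fun u => f (u ^ (2:ℝ))) z hc, mellin_comp_rpow]
      have := h1.2
      simp only [Complex.ofReal_ofNat] at *
      rw [this]
  have key2 := hasMellin_congr key (g := fun u : ℝ => ((a + u ^ 2 : ℝ) : ℂ) ^ (-s)) (by
    intro u hu
    have hu : 0 < u := hu
    simp only [hf, smul_eq_mul]
    rw [← Complex.mul_cpow_ofReal_nonneg ha.le (by positivity), ← Complex.ofReal_mul]
    congr 2
    rw [Real.mul_rpow hc.le hu.le, ← Real.rpow_mul ha.le]
    norm_num
    rw [Real.rpow_neg_one]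
    field_simp)
  convert! key2 using 1
  have e : ((a ^ (-(1/2) : ℝ) : ℝ) : ℂ) ^ (-z) = (a : ℂ) ^ (z / 2) := by
    rw [← Complex.cpow_mul_ofReal_nonneg ha.le]
    congr 1; push_cast; ring
  rw [e, sub_eq_add_neg, Complex.cpow_add _ _ ha', Complex.real_smul, smul_eq_mul, smul_eq_mul]
  norm_num
  ring

lemma norm_cpow_pos {a : ℝ} (ha : 0 < a) (s : ℂ) : ‖(a : ℂ) ^ s‖ = a ^ s.re :=
  Complex.norm_cpow_eq_rpow_re_of_pos ha s

lemma mel2norm {z s : ℂ} (hp : 0 < z.re) (hps : z.re < 2 * s.re) {a : ℝ} (ha : 0 < a) :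
    ∫ u in Ioi (0:ℝ), ‖(u : ℂ) ^ (z - 1) * ((a + u ^ 2 : ℝ) : ℂ) ^ (-s)‖ =
      a ^ (z.re / 2 - s.re) *
        ‖Complex.betaIntegral ((z.re : ℂ) / 2) ((s.re : ℂ) - (z.re : ℂ) / 2) / 2‖ := by
  have h := (mel2 (z := (z.re : ℂ)) (s := (s.re : ℂ)) (by simpa using hp) (by simpa using hps) ha).2
  have e : mellin (fun u : ℝ => ((a + u ^ 2 : ℝ) : ℂ) ^ (-(s.re : ℂ))) (z.re : ℂ) =
      ((∫ u in Ioi (0:ℝ), ‖(u : ℂ) ^ (z - 1) * ((a + u ^ 2 : ℝ) : ℂ) ^ (-s)‖ : ℝ) : ℂ) := by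
    rw [← integral_complex_ofReal]
    unfold mellin
    refine setIntegral_congr_fun measurableSet_Ioi fun u hu => ?_
    have hu : 0 < u := hu
    have hau : 0 < a + u ^ 2 := by positivity
    simp only [norm_mul, norm_cpow_pos hu, norm_cpow_pos hau, smul_eq_mul, Complex.ofReal_mul,
      Complex.ofReal_cpow hu.le, Complex.ofReal_cpow hau.le]
    simp
  rw [e] at h
  have h2 := congrArg norm h
  rw [Complex.norm_real, Real.norm_of_nonneg (integral_nonneg fun _ => norm_nonneg _), norm_mul,
    norm_cpow_pos ha] at h2
  rw [h2]
  congr 2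
  simp

/-- The integrand. -/
noncomputable def KK (s : ℂ) (t u : ℝ) : ℂ :=
  (t : ℂ) ^ (s - 1) * ((1 : ℂ) - (t : ℂ)) ^ (s - 1) * (((1 + u ^ 2 : ℝ) : ℂ) - (t : ℂ)) ^ (-s)

/-- Green's function in the variable `u`. -/
noncomputable def GG (s : ℂ) (u : ℝ) : ℂ := greenH s (1 + u ^ 2)

lemma GG_eq (s : ℂ) (u : ℝ) :
    GG s u = (1 / (4 * (Real.pi : ℂ))) * ∫ t in Ioo (0:ℝ) 1, KK s t u := rfl

lemma measurable_KK (s : ℂ) : Measurable (fun q : ℝ × ℝ => KK s q.2 q.1) := by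
  unfold KK
  fun_prop

lemma measurable_GG (s : ℂ) : Measurable (GG s) := by
  have h : StronglyMeasurable (fun u => ∫ t in Ioo (0:ℝ) 1, KK s t u) :=
    (measurable_KK s).stronglyMeasurable.integral_prod_right'
  exact h.measurable.const_mul _

lemma KK_eq {s : ℂ} {t u : ℝ} :
    KK s t u = (t : ℂ) ^ (s - 1) * ((1 - t : ℝ) : ℂ) ^ (s - 1) *
      (((1 - t) + u ^ 2 : ℝ) : ℂ) ^ (-s) := by
  unfold KK
  congr 2 
  · push_cast; ring_nf
  · push_cast; ring

lemma beta_int {x y : ℝ} (hx : 0 < x) (hy : 0 < y) :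
    IntegrableOn (fun t : ℝ => t ^ (x - 1) * (1 - t) ^ (y - 1)) (Ioo 0 1) := by
  have hI := Complex.betaIntegral_convergent (u := x) (v := y) (by simpa) (by simpa)
  rw [intervalIntegrable_iff_integrableOn_Ioo_of_le zero_le_one] at hI
  refine IntegrableOn.congr_fun (hI.norm) (fun t ht => ?_) measurableSet_Ioo
  have h1 : 0 < 1 - t := by linarith [ht.2]
  have e2 : (1 : ℂ) - t = ((1 - t : ℝ) : ℂ) := by push_cast; ring
  rw [e2, norm_mul, norm_cpow_pos ht.1, norm_cpow_pos h1]
  simp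

lemma KK_bound {s : ℂ} {δ : ℝ} (hδ : 0 < δ) (hδs : δ ≤ s.re) {t u : ℝ} (ht : t ∈ Ioo (0:ℝ) 1)
    (hu : 0 < u) : ‖KK s t u‖ ≤ t ^ (s.re - 1) * (1 - t) ^ (δ - 1) * u ^ (-(2 * δ)) := by
  have h1 : 0 < 1 - t := by linarith [ht.2]
  have h2 : 0 < (1 - t) + u ^ 2 := by positivity
  rw [KK_eq, norm_mul, norm_mul, norm_cpow_pos ht.1, norm_cpow_pos h1, norm_cpow_pos h2]
  simp only [Complex.sub_re, Complex.one_re, Complex.neg_re]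
  have e : -s.re = -(s.re - δ) + -δ := by ring
  have b1 : ((1 - t) + u ^ 2) ^ (-(s.re - δ)) ≤ (1 - t) ^ (-(s.re - δ)) :=
    Real.rpow_le_rpow_of_nonpos h1 (by nlinarith) (by linarith)
  have b2 : ((1 - t) + u ^ 2) ^ (-δ) ≤ u ^ (-(2 * δ)) := by
    have : u ^ (-(2 * δ)) = (u ^ 2) ^ (-δ) := by
      rw [← Real.rpow_natCast u 2, ← Real.rpow_mul hu.le]; congr 1; push_cast; ring
    rw [this]
    exact Real.rpow_le_rpow_of_nonpos (by positivity) (by linarith) (by linarith)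
  have e3 : (1 - t) ^ (δ - 1) = (1 - t) ^ (s.re - 1) * (1 - t) ^ (-(s.re - δ)) := by
    rw [← Real.rpow_add h1]; congr 1; ring
  have ht0 := ht.1
  rw [e, Real.rpow_add h2, e3]
  calc _ ≤ t ^ (s.re - 1) * (1 - t) ^ (s.re - 1) * ((1 - t) ^ (-(s.re - δ)) * u ^ (-(2 * δ))) := by
        gcongr
    _ = _ := by ring

lemma GG_bound {s : ℂ} {δ : ℝ} (hδ : 0 < δ) (hδs : δ ≤ s.re) :
    ∃ C : ℝ, ∀ u : ℝ, 0 < u → ‖GG s u‖ ≤ C * u ^ (-(2 * δ)) := by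
  refine ⟨‖(1 / (4 * (Real.pi : ℂ)))‖ * ∫ t in Ioo (0:ℝ) 1, t ^ (s.re - 1) * (1 - t) ^ (δ - 1),
    fun u hu => ?_⟩
  rw [GG_eq, norm_mul, mul_assoc, ← integral_mul_const]
  gcongr
  apply norm_integral_le_of_norm_le
  · exact (beta_int (by linarith) hδ).mul_const _
  · exact (ae_restrict_mem measurableSet_Ioo).mono fun t ht => KK_bound hδ hδs ht hu

lemma mellin_GG {z s : ℂ} (hp : 0 < z.re) (hps : z.re < 2 * s.re) :
    HasMellin (GG s) z (1 / (4 * (Real.pi : ℂ)) * (Complex.betaIntegral s (z / 2) *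
      (Complex.betaIntegral (z / 2) (s - z / 2) / 2))) := by
  set F : ℝ → ℝ → ℂ := fun u t => (u : ℂ) ^ (z - 1) * KK s t u with hF
  have hFm : Measurable (Function.uncurry F) := by
    have : Function.uncurry F = fun q : ℝ × ℝ => (q.1 : ℂ) ^ (z - 1) * KK s q.2 q.1 := rfl
    rw [this]
    have := measurable_KK s
    fun_prop
  have hFe : ∀ u t, F u t = ((t : ℂ) ^ (s - 1) * ((1 - t : ℝ) : ℂ) ^ (s - 1)) *
      ((u : ℂ) ^ (z - 1) * (((1 - t) + u ^ 2 : ℝ) : ℂ) ^ (-s)) := by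
    intro u t
    simp only [hF, KK_eq]; ring
  have hFint : Integrable (Function.uncurry F)
      ((volume.restrict (Ioi (0:ℝ))).prod (volume.restrict (Ioo (0:ℝ) 1))) := by
    rw [integrable_prod_iff' hFm.aestronglyMeasurable]
    constructor
    · refine (ae_restrict_mem measurableSet_Ioo).mono fun t ht => ?_
      simp only [Function.uncurry, hFe]
      exact (mel2 hp hps (a := 1 - t) (by linarith [ht.2])).1.const_mul _
    · have h0 := (beta_int (x := s.re) (y := z.re / 2) (by linarith) (by linarith)).mul_const
        ‖Complex.betaIntegral ((z.re : ℂ) / 2) ((s.re : ℂ) - (z.re : ℂ) / 2) / 2‖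
      refine IntegrableOn.congr_fun h0 (fun t ht => ?_) measurableSet_Ioo
      have h1 : 0 < 1 - t := by linarith [ht.2]
      simp only [Function.uncurry, hFe]
      simp_rw [norm_mul ((t : ℂ) ^ (s - 1) * ((1 - t : ℝ) : ℂ) ^ (s - 1))]
      rw [integral_const_mul, mel2norm hp hps h1, norm_mul, norm_cpow_pos ht.1, norm_cpow_pos h1]
      have e : z.re / 2 - 1 = (s.re - 1) + (z.re / 2 - s.re) := by ring
      rw [e, Real.rpow_add h1]
      simp only [Complex.sub_re, Complex.one_re]
      ring
  have hGe : ∀ u : ℝ, (u : ℂ) ^ (z - 1) • GG s u =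
      (1 / (4 * (Real.pi : ℂ))) * ∫ t in Ioo (0:ℝ) 1, F u t := by
    intro u
    simp only [hF]
    rw [integral_const_mul, GG_eq, smul_eq_mul]; ring
  constructor
  · unfold MellinConvergent
    simp_rw [hGe]
    exact hFint.integral_prod_left.const_mul _
  · unfold mellin
    simp_rw [hGe]
    rw [integral_const_mul, integral_integral_swap hFint]
    congr 1
    have : ∀ t ∈ Ioo (0:ℝ) 1, (∫ u in Ioi (0:ℝ), F u t) =
        ((t : ℂ) ^ (s - 1) * (1 - (t : ℂ)) ^ (z / 2 - 1)) *
          (Complex.betaIntegral (z / 2) (s - z / 2) / 2) := by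
      intro t ht
      have h1 : 0 < 1 - t := by linarith [ht.2]
      have h1' : ((1 - t : ℝ) : ℂ) ≠ 0 := by exact_mod_cast h1.ne'
      have e2 : (1 : ℂ) - t = ((1 - t : ℝ) : ℂ) := by push_cast; ring
      simp_rw [hFe]
      have := (mel2 hp hps h1).2
      unfold mellin at this
      simp only [smul_eq_mul] at this
      rw [integral_const_mul, this, e2]
      have e : z / 2 - 1 = (s - 1) + (z / 2 - s) := by ring
      rw [e, Complex.cpow_add _ _ h1']
      ring
    rw [setIntegral_congr_fun measurableSet_Ioo this, integral_mul_const]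
    congr 1
    unfold Complex.betaIntegral
    rw [intervalIntegral.integral_of_le zero_le_one, integral_Ioc_eq_integral_Ioo]

lemma mellin_GG_gamma {z s : ℂ} (hp : 0 < z.re) (hps : z.re < 2 * s.re) :
    mellin (GG s) z = 1 / (8 * (Real.pi : ℂ)) * (Complex.Gamma (z / 2) ^ 2 *
      Complex.Gamma (s - z / 2) / Complex.Gamma (s + z / 2)) := by
  have hz2 : (z / 2).re = z.re / 2 := by simp
  have h1 : 0 < (z / 2).re := by rw [hz2]; linarith
  have h2 : 0 < s.re := by linarith
  have h3 : 0 < (s - z / 2).re := by rw [Complex.sub_re, hz2]; linarith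
  rw [(mellin_GG hp hps).2, Complex.betaIntegral_eq_Gamma_mul_div _ _ h2 h1,
    Complex.betaIntegral_eq_Gamma_mul_div _ _ h1 h3]
  have hG := Complex.Gamma_ne_zero_of_re_pos h2
  have hG2 : Complex.Gamma (s + z / 2) ≠ 0 :=
    Complex.Gamma_ne_zero_of_re_pos (by rw [Complex.add_re]; linarith)
  have hpi : (Real.pi : ℂ) ≠ 0 := by exact_mod_cast Real.pi_pos.ne'
  have e : z / 2 + (s - z / 2) = s := by ring
  rw [e]
  field_simp
  ring

lemma GG_integrable {s : ℂ} (hs : 1 / 2 < s.re) : IntegrableOn (GG s) (Ioi 0) := by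
  have := (mellin_GG (z := 1) (s := s) (by simp) (by simp; linarith)).1
  unfold MellinConvergent at this
  simpa using this

lemma Gamma_ne {z : ℂ} (h : 0 < z.re) : ∀ m : ℕ, z ≠ -(m : ℂ) := by
  intro m hm
  rw [hm] at h
  simp at h
  linarith [(Nat.cast_nonneg m : (0:ℝ) ≤ m)]

lemma gamma_facts {s : ℂ} (hs : 1 / 2 < s.re) :
    Complex.Gamma (s + 1 / 2) = (s - 1 / 2) * Complex.Gamma (s - 1 / 2) := by
  have h : s - 1 / 2 ≠ 0 := by
    intro h; have := congrArg Complex.re h; simp at this; linarith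
  rw [← Complex.Gamma_add_one _ h]; congr 1; ring

lemma integral_GG {s : ℂ} (hs : 1 / 2 < s.re) :
    4 * (2 * s - 1) * ∫ u in Ioi (0:ℝ), GG s u = 1 := by
  have h := mellin_GG_gamma (z := 1) (s := s) (by simp) (by simp; linarith)
  unfold mellin at h
  simp only [sub_self, Complex.cpow_zero, one_smul] at h
  have h0 : s - 1 / 2 ≠ 0 := by
    intro h; have := congrArg Complex.re h; simp at this; linarith
  have h1 : Complex.Gamma (s - 1 / 2) ≠ 0 :=
    Complex.Gamma_ne_zero_of_re_pos (by simp; linarith)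
  have hpi : (Real.pi : ℂ) ≠ 0 := by exact_mod_cast Real.pi_pos.ne'
  have hA : Complex.Gamma (1 / 2) ^ 2 = Real.pi := by
    rw [Complex.Gamma_one_half_eq, ← Complex.cpow_nat_mul]; simp
  rw [h, hA, gamma_facts hs]
  have e : 2 * s - 1 = 2 * (s - 1 / 2) := by ring
  rw [e]
  generalize s - 1 / 2 = r at *
  field_simp
  norm_num

lemma log_GG {s : ℂ} (hs : 1 / 2 < s.re) :
    IntegrableOn (fun u => (Real.log u : ℂ) * GG s u) (Ioi 0) ∧
    4 * (2 * s - 1) * ∫ u in Ioi (0:ℝ), (Real.log u : ℂ) * GG s u =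
      -(Real.eulerMascheroniConstant : ℂ) - 2 * (Real.log 2 : ℂ) - digamma (s + 1 / 2)
        + 1 / (2 * s - 1) := by
  obtain ⟨C1, hC1⟩ := GG_bound (s := s) (δ := s.re) (by linarith) le_rfl
  obtain ⟨C2, hC2⟩ := GG_bound (s := s) (δ := 1 / 4) (by norm_num) (by linarith)
  have hO1 : GG s =O[atTop] (fun x : ℝ => x ^ (-(2 * s.re))) := by
    refine Asymptotics.IsBigO.of_bound C1 ?_
    filter_upwards [eventually_gt_atTop 0] with u hu
    rw [Real.norm_of_nonneg (by positivity)]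
    exact hC1 u hu
  have hO2 : GG s =O[𝓝[>] 0] (fun x : ℝ => x ^ (-(2 * (1 / 4) : ℝ))) := by
    refine Asymptotics.IsBigO.of_bound C2 ?_
    filter_upwards [self_mem_nhdsWithin] with u hu
    have hu : 0 < u := hu
    rw [Real.norm_of_nonneg (by positivity)]
    exact hC2 u hu
  obtain ⟨m1, m2⟩ := mellin_hasDerivAt_of_isBigO_rpow (s := 1)
    (GG_integrable hs).locallyIntegrableOn hO1 (by simp; linarith) hO2 (by norm_num)
  have hform : mellin (GG s) =ᶠ[𝓝 1] fun z => 1 / (8 * (Real.pi : ℂ)) * (Complex.Gamma (z / 2) ^ 2 *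
      Complex.Gamma (s - z / 2) / Complex.Gamma (s + z / 2)) := by
    have c : ContinuousAt Complex.re 1 := Complex.continuous_re.continuousAt
    have n1 := c.eventually (lt_mem_nhds (a := 0) (by simp))
    have n2 := c.eventually (eventually_lt_nhds (show Complex.re 1 < 2 * s.re by rw [Complex.one_re]; linarith))
    filter_upwards [n1, n2] with z h1 h2 using mellin_GG_gamma h1 h2
  have hr : 0 < (s - 1 / 2).re := by simp; linarith
  have hr2 : 0 < (s + 1 / 2).re := by simp; linarith
  have h0 : s - 1 / 2 ≠ 0 := by
    intro h; rw [h, Complex.zero_re] at hr; exact lt_irrefl _ hr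
  have hB : Complex.Gamma (s - 1 / 2) ≠ 0 := Complex.Gamma_ne_zero_of_re_pos hr
  have hC : Complex.Gamma (s + 1 / 2) ≠ 0 := Complex.Gamma_ne_zero_of_re_pos hr2
  have dA : HasDerivAt (fun z : ℂ => Complex.Gamma (z / 2)) _ 1 :=
    HasDerivAt.comp (𝕜 := ℂ) (h₂ := Complex.Gamma) 1 Complex.hasDerivAt_Gamma_one_half
      ((hasDerivAt_id (1:ℂ)).div_const 2)
  have dB : HasDerivAt (fun z : ℂ => Complex.Gamma (s - z / 2)) _ 1 :=
    HasDerivAt.comp (𝕜 := ℂ) (h₂ := Complex.Gamma) 1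
      (Complex.differentiableAt_Gamma (s - 1 / 2) (Gamma_ne hr)).hasDerivAt
      (((hasDerivAt_id (1:ℂ)).div_const 2).const_sub s)
  have dC : HasDerivAt (fun z : ℂ => Complex.Gamma (s + z / 2)) _ 1 :=
    HasDerivAt.comp (𝕜 := ℂ) (h₂ := Complex.Gamma) 1
      (Complex.differentiableAt_Gamma (s + 1 / 2) (Gamma_ne hr2)).hasDerivAt
      (((hasDerivAt_id (1:ℂ)).div_const 2).const_add s)
  have dM := ((((dA.pow 2).mul dB).div dC hC).const_mul (1 / (8 * (Real.pi : ℂ))))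
  have heq := (m2.congr_of_eventuallyEq hform.symm).unique dM
  have hdig : deriv Complex.Gamma (s - 1 / 2) =
      Complex.Gamma (s - 1 / 2) * (digamma (s + 1 / 2) - 1 / (s - 1 / 2)) := by
    have := Complex.digamma_apply_add_one (s - 1 / 2) (Gamma_ne hr)
    rw [Complex.digamma_def, logDeriv_apply, logDeriv_apply,
      show s - 1 / 2 + 1 = s + 1 / 2 by ring] at this
    unfold digamma
    rw [this, one_div (s - 1 / 2), add_sub_cancel_right, mul_div_cancel₀ _ hB]
  have hdig2 : deriv Complex.Gamma (s + 1 / 2) = Complex.Gamma (s + 1 / 2) * digamma (s + 1 / 2) := by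
    unfold digamma; rw [mul_div_cancel₀ _ hC]
  constructor
  · unfold MellinConvergent at m1
    simpa using m1
  · have e1 : mellin (fun t => Real.log t • GG s t) 1 =
        ∫ u in Ioi (0:ℝ), (Real.log u : ℂ) * GG s u := by
      unfold mellin; simp
    rw [← e1, heq]
    have hpi : (Real.pi : ℂ) ≠ 0 := by exact_mod_cast Real.pi_pos.ne'
    have hA : Complex.Gamma (1 / 2) = ((√Real.pi : ℝ) : ℂ) := by
      rw [Complex.Gamma_one_half_eq, Real.sqrt_eq_rpow, Complex.ofReal_cpow Real.pi_pos.le]; simp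
    have hA2 : ((√Real.pi : ℝ) : ℂ) ^ 2 = Real.pi := by
      rw [← Complex.ofReal_pow, Real.sq_sqrt Real.pi_pos.le]
    have e : 2 * s - 1 = 2 * (s - 1 / 2) := by ring
    simp only [Pi.mul_apply, Pi.pow_apply]
    rw [hdig, hdig2, hA, gamma_facts hs, e]
    have hl : Complex.log 2 = (Real.log 2 : ℂ) := by simp
    try rw [hl]
    generalize digamma (s + 1 / 2) = D at *
    generalize Complex.Gamma (s - 1 / 2) = B at *
    generalize s - 1 / 2 = r at *
    generalize ((√Real.pi : ℝ) : ℂ) = q at *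
    rw [← hA2] at hpi ⊢
    have hq : q ≠ 0 := by rintro rfl; simp at hpi
    field_simp
    ring

lemma image_const_div {c ε : ℝ} (hc : 0 < c) (hε : 0 < ε) :
    (fun y : ℝ => c / y) '' Ioo 0 (1 / ε) = Ioi (c * ε) := by
  ext v
  simp only [mem_image, mem_Ioo, mem_Ioi]
  constructor
  · rintro ⟨y, ⟨h0, h1⟩, rfl⟩
    rw [lt_div_iff₀ hε] at h1
    rw [lt_div_iff₀ h0]
    nlinarith
  · intro hv
    have hv0 : 0 < v := lt_trans (by positivity) hv
    refine ⟨c / v, ⟨by positivity, ?_⟩, ?_⟩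
    · rw [div_lt_div_iff₀ hv0 hε]; linarith
    · field_simp

lemma cov_deriv {c ε : ℝ} : ∀ y ∈ Ioo (0:ℝ) (1 / ε),
    HasDerivWithinAt (fun y : ℝ => c / y) (-(c / y ^ 2)) (Ioo 0 (1 / ε)) y := by
  intro y hy
  have := ((hasDerivAt_inv hy.1.ne').const_mul c).hasDerivWithinAt (s := Ioo 0 (1 / ε))
  convert! this using 1
  field_simp

lemma cov_inj {c ε : ℝ} (hc : 0 < c) : InjOn (fun y : ℝ => c / y) (Ioo 0 (1 / ε)) := by
  intro x hx y hy h
  have h1 := hx.1.ne'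
  have h2 := hy.1.ne'
  simp only at h
  field_simp at h
  exact h.symm

lemma cov {E : Type*} [NormedAddCommGroup E] [NormedSpace ℝ E] {c ε : ℝ} (hc : 0 < c) (hε : 0 < ε)
    (f : ℝ → E) :
    ∫ y in Ioo (0:ℝ) (1 / ε), (1 / y ^ 2) • f (c / y) = ∫ u in Ici (c * ε), (1 / c) • f u := by
  rw [integral_Ici_eq_integral_Ioi, ← image_const_div hc hε,
    integral_image_eq_integral_abs_deriv_smul measurableSet_Ioo cov_deriv (cov_inj hc)]
  refine setIntegral_congr_fun measurableSet_Ioo fun y hy => ?_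
  have hy0 := hy.1
  simp only [abs_neg]
  rw [abs_of_pos (by positivity), smul_smul]
  congr 1
  field_simp

lemma cov_int {E : Type*} [NormedAddCommGroup E] [NormedSpace ℝ E] {c ε : ℝ} (hc : 0 < c)
    (hε : 0 < ε) {f : ℝ → E} (hf : IntegrableOn f (Ioi 0)) :
    IntegrableOn (fun y : ℝ => (1 / y ^ 2) • f (c / y)) (Ioo (0:ℝ) (1 / ε)) := by
  have h1 : IntegrableOn (fun u => (1 / c) • f u) (Ioi (c * ε)) :=
    (hf.mono_set (Ioi_subset_Ioi (by positivity))).smul _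
  rw [← image_const_div hc hε, integrableOn_image_iff_integrableOn_abs_deriv_smul measurableSet_Ioo
    cov_deriv (cov_inj hc)] at h1
  refine h1.congr_fun (fun y hy => ?_) measurableSet_Ioo
  have hy0 := hy.1
  simp only [abs_neg]
  rw [abs_of_pos (by positivity), smul_smul]
  congr 1
  field_simp

lemma summable_norms {s : ℂ} (hs : 1 / 2 < s.re) {ε : ℝ} (hε : 0 < ε) :
    Summable (fun k : ℕ => ∫ y in Ioo (0:ℝ) (1 / ε),
      ‖(1 / y ^ 2) • GG s ((((k : ℝ) + 1) / 2) / y)‖) := by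
  obtain ⟨C, hC⟩ := GG_bound (s := s) (δ := s.re) (by linarith) le_rfl
  have hI : IntegrableOn (fun y : ℝ => y ^ (2 * s.re - 2)) (Ioo 0 (1 / ε)) := by
    have := intervalIntegral.intervalIntegrable_rpow' (a := 0) (b := 1 / ε) (r := 2 * s.re - 2)
      (by linarith)
    rwa [intervalIntegrable_iff_integrableOn_Ioo_of_le (by positivity)] at this
  have hsum : Summable (fun k : ℕ => ((k : ℝ) + 1) ^ (-(2 * s.re))) := by
    have := (Real.summable_nat_rpow (p := -(2 * s.re))).2 (by linarith)
    have := (summable_nat_add_iff 1).2 this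
    simpa using this
  refine Summable.of_nonneg_of_le (fun k => integral_nonneg fun _ => norm_nonneg _) (fun k => ?_)
    ((hsum.mul_left (C * (1 / 2) ^ (-(2 * s.re)))).mul_right
      (∫ y in Ioo (0:ℝ) (1 / ε), y ^ (2 * s.re - 2)))
  rw [← integral_const_mul]
  have hk : (0:ℝ) < ((k : ℝ) + 1) / 2 := by positivity
  refine setIntegral_mono_on (cov_int hk hε (GG_integrable hs)).norm (hI.const_mul _)
    measurableSet_Ioo fun y hy => ?_
  have hy0 := hy.1
  rw [norm_smul, Real.norm_of_nonneg (by positivity)]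
  calc _ ≤ 1 / y ^ 2 * (C * ((((k : ℝ) + 1) / 2) / y) ^ (-(2 * s.re))) := by
        gcongr
        exact hC _ (by positivity)
    _ = _ := by
        have e1 : (((k : ℝ) + 1) / 2) / y = (((k : ℝ) + 1) * (1 / 2)) * y⁻¹ := by ring
        rw [e1, Real.mul_rpow (by positivity) (by positivity),
          Real.mul_rpow (by positivity) (by positivity), Real.inv_rpow hy0.le, Real.rpow_neg hy0.le (2 * s.re),
          Real.rpow_sub hy0, inv_inv]
        norm_num
        ring

lemma sum_ind {s : ℂ} {ε : ℝ} (hε : 0 < ε) (u : ℝ) (hu : 0 < u) :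
    ∑' k : ℕ, (Ici ((((k : ℝ) + 1) / 2) * ε)).indicator
      (fun u => (1 / (((k : ℝ) + 1) / 2)) • GG s u) u
    = 2 * ((harmonic ⌊2 * u / ε⌋₊ : ℚ) : ℂ) * GG s u := by
  have hiff : ∀ k : ℕ, ((((k : ℝ) + 1) / 2) * ε ≤ u ↔ k ∈ Finset.range ⌊2 * u / ε⌋₊) := by
    intro k
    rw [Finset.mem_range, ← Nat.add_one_le_iff, Nat.le_floor_iff (by positivity), le_div_iff₀ hε]
    push_cast
    constructor <;> intro h <;> linarith
  rw [tsum_eq_sum (s := Finset.range ⌊2 * u / ε⌋₊)]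
  · rw [harmonic]
    push_cast
    rw [Finset.mul_sum, Finset.sum_mul]
    refine Finset.sum_congr rfl fun k hk => ?_
    rw [indicator_of_mem (by rw [mem_Ici]; exact (hiff k).2 hk), Complex.real_smul]
    push_cast
    congr 1
    have : (k : ℂ) + 1 ≠ 0 := by exact_mod_cast Nat.succ_ne_zero k
    field_simp
  · intro k hk
    rw [indicator_of_notMem]
    rw [mem_Ici, hiff k]
    exact hk

lemma setInt_ind {E : Type*} [NormedAddCommGroup E] [NormedSpace ℝ E] {a : ℝ} (ha : 0 < a)
    (f : ℝ → E) : ∫ u in Ioi (0:ℝ), (Ici a).indicator f u = ∫ u in Ici a, f u := by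
  rw [integral_indicator measurableSet_Ici, Measure.restrict_restrict measurableSet_Ici,
    inter_eq_left.2 (show Ici a ⊆ Ioi 0 from fun x hx => lt_of_lt_of_le ha hx)]

lemma main_rewrite {s : ℂ} (hs : 1 / 2 < s.re) {ε : ℝ} (hε : 0 < ε) :
    (∫ y in Ioo (0:ℝ) (1/ε),
            (∑' k : ℕ, greenH s (1 + ((k : ℝ) + 1) ^ 2 / (4 * y ^ 2))) / (y : ℂ) ^ 2) =
      ∫ u in Ioi (0:ℝ), 2 * ((harmonic ⌊2 * u / ε⌋₊ : ℚ) : ℂ) * GG s u := by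
  have hk : ∀ k : ℕ, (0:ℝ) < ((k : ℝ) + 1) / 2 := fun k => by positivity
  have e1 : ∀ y : ℝ, (∑' k : ℕ, greenH s (1 + ((k : ℝ) + 1) ^ 2 / (4 * y ^ 2))) / (y : ℂ) ^ 2 =
      ∑' k : ℕ, (1 / y ^ 2) • GG s ((((k : ℝ) + 1) / 2) / y) := by
    intro y
    rw [← tsum_div_const]
    refine tsum_congr fun k => ?_
    unfold GG
    rw [Complex.real_smul]
    have : (((k : ℝ) + 1) / 2 / y) ^ 2 = ((k : ℝ) + 1) ^ 2 / (4 * y ^ 2) := by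
      rw [div_pow, div_pow, div_div]; norm_num
    rw [this]; push_cast; ring
  simp_rw [e1]
  have hG := GG_integrable hs
  have H1 := hasSum_integral_of_summable_integral_norm
    (fun k : ℕ => cov_int (hk k) hε hG) (summable_norms hs hε)
  rw [← H1.tsum_eq]
  have e2 : ∀ k : ℕ, (∫ y in Ioo (0:ℝ) (1 / ε), (1 / y ^ 2) • GG s ((((k : ℝ) + 1) / 2) / y)) =
      ∫ u in Ioi (0:ℝ), (Ici ((((k : ℝ) + 1) / 2) * ε)).indicator
      (fun u => (1 / (((k : ℝ) + 1) / 2)) • GG s u) u := by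
    intro k
    rw [setInt_ind (mul_pos (hk k) hε), cov (hk k) hε]
  have e3 : ∀ k : ℕ, (∫ y in Ioo (0:ℝ) (1 / ε), ‖(1 / y ^ 2) • GG s ((((k : ℝ) + 1) / 2) / y)‖) =
      ∫ u in Ioi (0:ℝ), ‖(Ici ((((k : ℝ) + 1) / 2) * ε)).indicator
      (fun u => (1 / (((k : ℝ) + 1) / 2)) • GG s u) u‖ := by
    intro k
    simp_rw [norm_indicator_eq_indicator_norm]
    rw [setInt_ind (mul_pos (hk k) hε)]
    have := cov (hk k) hε (fun u => ‖GG s u‖)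
    have hk' := hk k
    simp_rw [norm_smul, Real.norm_of_nonneg (show (0:ℝ) ≤ 1 / (((k : ℝ) + 1) / 2) by positivity)]
    rw [show (fun u => (1 / (((k : ℝ) + 1) / 2)) * ‖GG s u‖) =
      (fun u => (1 / (((k : ℝ) + 1) / 2)) • ‖GG s u‖) from rfl, ← this]
    refine integral_congr_ae (Eventually.of_forall fun y => ?_)
    simp
  have hS := summable_norms hs hε
  simp_rw [e3] at hS
  simp_rw [e2]
  have H2 := hasSum_integral_of_summable_integral_norm (μ := volume.restrict (Ioi (0:ℝ)))
    (F := fun k : ℕ => (Ici ((((k : ℝ) + 1) / 2) * ε)).indicator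
      (fun u => (1 / (((k : ℝ) + 1) / 2)) • GG s u))
    (fun k : ℕ => (Integrable.smul (1 / (((k : ℝ) + 1) / 2)) hG).indicator measurableSet_Ici) hS
  rw [H2.tsum_eq]
  exact setIntegral_congr_fun measurableSet_Ioi fun u hu => sum_ind hε u hu

lemma W_bound {ε u : ℝ} (hε : 0 < ε) (hε1 : ε ≤ 1) (hu : 0 < u) :
    |((harmonic ⌊2 * u / ε⌋₊ : ℚ) : ℝ) + Real.log ε| ≤ 2 + |Real.log u| := by
  have hl : Real.log (2 * u / ε) = Real.log 2 + Real.log u - Real.log ε := by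
    rw [Real.log_div (by positivity) hε.ne', Real.log_mul two_ne_zero hu.ne']
  have h2 : Real.log 2 < 1 := by linarith [Real.log_two_lt_d9]
  have h2' : 0 < Real.log 2 := Real.log_pos (by norm_num)
  have hlε : Real.log ε ≤ 0 := Real.log_nonpos hε.le hε1
  have hu1 := le_abs_self (Real.log u)
  have hu2 := neg_abs_le (Real.log u)
  rcases le_or_gt 1 (2 * u / ε) with h | h
  · have a1 := log_le_harmonic_floor (2 * u / ε) (by positivity)
    have a2 := harmonic_floor_le_one_add_log (2 * u / ε) h
    rw [hl] at a1 a2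
    rw [abs_le]
    constructor <;> linarith
  · have : ⌊2 * u / ε⌋₊ = 0 := Nat.floor_eq_zero.2 h
    have hneg : Real.log (2 * u / ε) ≤ 0 := Real.log_nonpos (by positivity) h.le
    rw [this]
    simp only [harmonic_zero, Rat.cast_zero, zero_add]
    rw [abs_le]
    constructor <;> linarith

lemma harm_floor_tendsto : Tendsto (fun x : ℝ => ((harmonic ⌊x⌋₊ : ℚ) : ℝ) - Real.log x) atTop
    (𝓝 Real.eulerMascheroniConstant) := by
  have h1 := Real.tendsto_harmonic_sub_log.comp (tendsto_nat_floor_atTop (α := ℝ))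
  have h2 : Tendsto (fun x : ℝ => Real.log ((⌊x⌋₊ : ℝ) / x)) atTop (𝓝 0) := by
    have := (Real.continuousAt_log one_ne_zero).tendsto.comp
      (tendsto_nat_floor_div_atTop (R := ℝ))
    simpa [Function.comp_def] using this
  have h3 := h1.add h2
  rw [add_zero] at h3
  refine h3.congr' ?_
  filter_upwards [eventually_ge_atTop 1] with x hx
  have hf : (⌊x⌋₊ : ℝ) ≠ 0 := by
    exact_mod_cast (Nat.floor_pos.2 hx).ne'
  simp only [Function.comp]
  rw [Real.log_div hf (by linarith)]
  ring

lemma W_tendsto {u : ℝ} (hu : 0 < u) :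
    Tendsto (fun ε : ℝ => ((harmonic ⌊2 * u / ε⌋₊ : ℚ) : ℝ) + Real.log ε) (𝓝[>] 0)
    (𝓝 (Real.eulerMascheroniConstant + Real.log 2 + Real.log u)) := by
  have h0 : Tendsto (fun ε : ℝ => 2 * u / ε) (𝓝[>] 0) atTop := by
    simp_rw [div_eq_mul_inv]
    exact tendsto_inv_nhdsGT_zero.const_mul_atTop (by positivity)
  have h1 := (harm_floor_tendsto.comp h0).add_const (Real.log 2 + Real.log u)
  rw [← add_assoc] at h1
  refine h1.congr' ?_
  filter_upwards [self_mem_nhdsWithin] with ε hε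
  have hε : 0 < ε := hε
  simp only [Function.comp]
  rw [Real.log_div (by positivity) hε.ne', Real.log_mul two_ne_zero hu.ne']
  ring

lemma final_tendsto {s : ℂ} (hs : 1 / 2 < s.re) :
    Filter.Tendsto
      (fun ε : ℝ =>
        2 * (2 * s - 1) * (∫ y in Set.Ioo (0:ℝ) (1/ε),
            (∑' k : ℕ, greenH s (1 + ((k : ℝ) + 1) ^ 2 / (4 * y ^ 2))) / (y : ℂ) ^ 2)
          + (Real.log ε : ℂ))
      (nhdsWithin 0 (Set.Ioi 0))
      (nhds (-(Real.log 2 : ℂ) - digamma (s + 1 / 2) + 1 / (2 * s - 1))) := by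
  have hG := GG_integrable hs
  obtain ⟨hL, hLv⟩ := log_GG hs
  have hGv := integral_GG hs
  set W : ℝ → ℝ → ℝ := fun ε u => ((harmonic ⌊2 * u / ε⌋₊ : ℚ) : ℝ) + Real.log ε with hW
  have hWm : ∀ ε, AEStronglyMeasurable (fun u => ((W ε u : ℝ) : ℂ) * GG s u)
      (volume.restrict (Ioi (0:ℝ))) := by
    intro ε
    have hm : Measurable (W ε) := by
      have h1 : Measurable (fun u : ℝ => ⌊2 * u / ε⌋₊) :=
        Nat.measurable_floor.comp (by fun_prop)
      have h2 : Measurable (fun n : ℕ => ((harmonic n : ℚ) : ℝ)) := measurable_from_top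
      exact (h2.comp h1).add_const _
    exact ((Complex.measurable_ofReal.comp hm).mul (measurable_GG s)).aestronglyMeasurable
  have hbi : Integrable (fun u => 2 * ‖GG s u‖ + ‖(Real.log u : ℂ) * GG s u‖)
      (volume.restrict (Ioi (0:ℝ))) := (hG.norm.const_mul 2).add hL.norm
  have hb : ∀ ε, 0 < ε → ε ≤ 1 → ∀ᵐ u ∂(volume.restrict (Ioi (0:ℝ))),
      ‖((W ε u : ℝ) : ℂ) * GG s u‖ ≤ 2 * ‖GG s u‖ + ‖(Real.log u : ℂ) * GG s u‖ := by
    intro ε h0 h1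
    refine (ae_restrict_mem measurableSet_Ioi).mono fun u hu => ?_
    rw [norm_mul, norm_mul, Complex.norm_real, Complex.norm_real, ← add_mul]
    gcongr
    exact W_bound h0 h1 hu
  have hev : ∀ᶠ ε : ℝ in 𝓝[>] 0, 0 < ε ∧ ε ≤ 1 := by
    filter_upwards [self_mem_nhdsWithin, nhdsWithin_le_nhds (Iic_mem_nhds (zero_lt_one' ℝ))] with ε h h'
      using ⟨h, h'⟩
  have hT : Tendsto (fun ε => ∫ u in Ioi (0:ℝ), ((W ε u : ℝ) : ℂ) * GG s u) (𝓝[>] 0)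
      (𝓝 (∫ u in Ioi (0:ℝ),
        ((Real.eulerMascheroniConstant + Real.log 2 + Real.log u : ℝ) : ℂ) * GG s u)) := by
    refine tendsto_integral_filter_of_dominated_convergence _ (Eventually.of_forall hWm)
      (hev.mono fun ε h => hb ε h.1 h.2) hbi ?_
    refine (ae_restrict_mem measurableSet_Ioi).mono fun u hu => ?_
    exact ((Complex.continuous_ofReal.tendsto _).comp (W_tendsto hu)).mul_const _
  have hlim : 4 * (2 * s - 1) * (∫ u in Ioi (0:ℝ),
        ((Real.eulerMascheroniConstant + Real.log 2 + Real.log u : ℝ) : ℂ) * GG s u) =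
      -(Real.log 2 : ℂ) - digamma (s + 1 / 2) + 1 / (2 * s - 1) := by
    have : ∀ u : ℝ, ((Real.eulerMascheroniConstant + Real.log 2 + Real.log u : ℝ) : ℂ) * GG s u =
        ((Real.eulerMascheroniConstant : ℂ) + (Real.log 2 : ℂ)) * GG s u +
          (Real.log u : ℂ) * GG s u := by
      intro u; push_cast; ring
    simp_rw [this]
    rw [integral_add (hG.const_mul _) hL, integral_const_mul, mul_add, hLv, mul_left_comm, hGv]
    ring
  rw [← hlim]
  refine (hT.const_mul (4 * (2 * s - 1))).congr' ?_
  refine hev.mono fun ε h => ?_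
  simp only
  rw [main_rewrite hs h.1]
  have hWi : IntegrableOn (fun u => ((W ε u : ℝ) : ℂ) * GG s u) (Ioi 0) :=
    hbi.mono' (hWm ε) (hb ε h.1 h.2)
  have e : ∀ u : ℝ, 2 * ((harmonic ⌊2 * u / ε⌋₊ : ℚ) : ℂ) * GG s u =
      2 * (((W ε u : ℝ) : ℂ) * GG s u) - 2 * (Real.log ε : ℂ) * GG s u := by
    intro u; simp only [hW]; push_cast; ring
  simp_rw [e]
  rw [integral_sub (hWi.const_mul _) (hG.const_mul _), integral_const_mul, integral_const_mul]
  linear_combination (Real.log ε : ℂ) * hGv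

end HornAux

/-- Proposition 2.4 of the paper: the regularized resolvent trace of the parabolic
cylinder (horn) `H = Γ_∞\ℍ`.  For `Re s > 1/2`,
`lim_{ε→0⁺} [2(2s-1) ∫₀^{1/ε} (∑_{k=1}^∞ g_s(1+k²/(4y²))) y⁻² dy + log ε]
  = -log 2 - Ψ(s+1/2) + 1/(2s-1)`. -/
theorem horn_regularized_trace (s : ℂ) (hs : 1 / 2 < s.re) :
    Filter.Tendsto
      (fun ε : ℝ =>
        2 * (2 * s - 1) * (∫ y in Set.Ioo (0:ℝ) (1/ε),
            (∑' k : ℕ, greenH s (1 + ((k : ℝ) + 1) ^ 2 / (4 * y ^ 2))) / (y : ℂ) ^ 2)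
          + (Real.log ε : ℂ))
      (nhdsWithin 0 (Set.Ioi 0))
      (nhds (-(Real.log 2 : ℂ) - digamma (s + 1 / 2) + 1 / (2 * s - 1))) := by
  exact final_tendsto hs
end

section
/- Let s be a complex number with Re(s) > 1/2. Then 4(2s−1) ∫₀^∞ g_s(1 + u²) log u du = −γ − log 4 − Ψ(s + 1/2) + 1/(2s−1). -/
open MeasureTheory

noncomputable def gK (s : ℂ) (u t : ℝ) : ℂ :=
  (t : ℂ) ^ (s - 1) * ((1 : ℂ) - (t : ℂ)) ^ (s - 1) * (((1 + u ^ 2 : ℝ) : ℂ) - (t : ℂ)) ^ (-s)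

lemma gK_norm_le (s : ℂ) (e : ℝ) (he : e ≤ s.re) (u t : ℝ) (hu : 0 < u) (he0 : 0 < e)
    (ht : t ∈ Set.Ioo (0:ℝ) 1) :
    ‖gK s u t‖ ≤ u ^ (-(2 * e)) * (t ^ (s.re - 1) * (1 - t) ^ (e - 1)) := by
  obtain ⟨ht0, ht1⟩ := ht
  have h1 : 0 < 1 - t := by linarith
  have h2 : 0 < 1 + u ^ 2 - t := by nlinarith [sq_nonneg u]
  have hn : ‖gK s u t‖ = t ^ (s.re - 1) * (1 - t) ^ (s.re - 1) * (1 + u ^ 2 - t) ^ (-s.re) := by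
    unfold gK
    rw [norm_mul, norm_mul, ← Complex.ofReal_one, ← Complex.ofReal_sub, ← Complex.ofReal_sub,
      Complex.norm_cpow_eq_rpow_re_of_pos ht0, Complex.norm_cpow_eq_rpow_re_of_pos h1,
      Complex.norm_cpow_eq_rpow_re_of_pos h2]
    simp
  rw [hn]
  have h3 : (1 + u ^ 2 - t) ^ (-s.re) ≤ u ^ (-(2 * e)) * (1 - t) ^ (-(s.re - e)) := by
    have : -s.re = -e + -(s.re - e) := by ring
    rw [this, Real.rpow_add h2]
    have e1 : u ^ (-(2 * e)) = (u ^ 2) ^ (-e) := by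
      rw [← Real.rpow_natCast, ← Real.rpow_mul hu.le]; push_cast; congr 1; ring
    rw [e1]
    have h4 : (1 + u ^ 2 - t) ^ (-e) ≤ (u ^ 2) ^ (-e) :=
      Real.rpow_le_rpow_of_nonpos (by positivity) (by linarith) (by linarith)
    have h5 : (1 + u ^ 2 - t) ^ (-(s.re - e)) ≤ (1 - t) ^ (-(s.re - e)) :=
      Real.rpow_le_rpow_of_nonpos (by positivity) (by nlinarith) (by linarith)
    gcongr
  have h6 : (1 - t) ^ (e - 1) = (1 - t) ^ (s.re - 1) * (1 - t) ^ (-(s.re - e)) := by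
    rw [← Real.rpow_add h1]; congr 1; ring
  rw [h6]
  calc _ ≤ t ^ (s.re - 1) * (1 - t) ^ (s.re - 1) * (u ^ (-(2 * e)) * (1 - t) ^ (-(s.re - e))) := by
        gcongr
    _ = _ := by ring

lemma beta_Ioo (u v : ℂ) : Complex.betaIntegral u v =
    ∫ x in Set.Ioo (0:ℝ) 1, (x : ℂ) ^ (u - 1) * (1 - (x : ℂ)) ^ (v - 1) := by
  rw [Complex.betaIntegral, intervalIntegral.integral_of_le zero_le_one,
    MeasureTheory.integral_Ioc_eq_integral_Ioo]

lemma k_integrable (a b : ℝ) (ha : 0 < a) (hb : 0 < b) :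
    IntegrableOn (fun t : ℝ => t ^ (a - 1) * (1 - t) ^ (b - 1)) (Set.Ioo (0:ℝ) 1) := by
  have h := (Complex.betaIntegral_convergent (u := a) (v := b) (by simpa) (by simpa))
  rw [intervalIntegrable_iff_integrableOn_Ioo_of_le zero_le_one] at h
  refine h.norm.congr ?_
  filter_upwards [ae_restrict_mem measurableSet_Ioo] with t ht
  have h1 : 0 < 1 - t := by linarith [ht.2]
  have e2 : (1 : ℂ) - (t : ℂ) = ((1 - t : ℝ) : ℂ) := by push_cast; ring
  rw [norm_mul, e2, Complex.norm_cpow_eq_rpow_re_of_pos ht.1, Complex.norm_cpow_eq_rpow_re_of_pos h1]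
  simp

lemma gK_meas (s : ℂ) : Measurable (fun p : ℝ × ℝ => gK s p.1 p.2) := by
  unfold gK
  fun_prop

lemma gK_integrable (s : ℂ) (hs : 0 < s.re) (u : ℝ) (hu : 0 < u) :
    IntegrableOn (gK s u) (Set.Ioo (0:ℝ) 1) := by
  refine Integrable.mono' ((k_integrable s.re s.re hs hs).const_mul (u ^ (-(2 * s.re)))) ?_ ?_
  · exact ((gK_meas s).comp (measurable_prodMk_left (x := u))).aestronglyMeasurable
  · filter_upwards [ae_restrict_mem measurableSet_Ioo] with t ht
    exact gK_norm_le s s.re le_rfl u t hu hs ht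

noncomputable def gF (s : ℂ) (u : ℝ) : ℂ := ∫ t in Set.Ioo (0:ℝ) 1, gK s u t

lemma gF_bound (s : ℂ) (e : ℝ) (he : e ≤ s.re) (he0 : 0 < e) : ∃ C : ℝ, ∀ u : ℝ, 0 < u →
    ‖gF s u‖ ≤ C * u ^ (-(2 * e)) := by
  refine ⟨∫ t in Set.Ioo (0:ℝ) 1, t ^ (s.re - 1) * (1 - t) ^ (e - 1), fun u hu => ?_⟩
  rw [mul_comm, ← integral_const_mul]
  refine norm_integral_le_of_norm_le ((k_integrable s.re e (by linarith) he0).const_mul _) ?_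
  filter_upwards [ae_restrict_mem measurableSet_Ioo] with t ht
  exact gK_norm_le s e he u t hu he0 ht

lemma gF_meas (s : ℂ) : StronglyMeasurable (gF s) :=
  by
  have h : StronglyMeasurable (Function.uncurry (gK s)) := (gK_meas s).stronglyMeasurable
  exact h.integral_prod_right

lemma gF_locInt (s : ℂ) (hs : 0 < s.re) : LocallyIntegrableOn (gF s) (Set.Ioi 0) := by
  obtain ⟨C, hC⟩ := gF_bound s s.re le_rfl hs
  have h : LocallyIntegrableOn (fun u : ℝ => C * u ^ (-(2 * s.re))) (Set.Ioi 0) := by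
    refine ContinuousOn.locallyIntegrableOn ?_ measurableSet_Ioi
    intro u hu
    have : u ≠ 0 := ne_of_gt hu
    exact (continuousAt_const.mul (Real.continuousAt_rpow_const _ _ (Or.inl this))).continuousWithinAt
  rw [locallyIntegrableOn_iff (isOpen_Ioi.isLocallyClosed)] at h ⊢
  intro k hk hkc
  refine Integrable.mono' (h k hk hkc) (gF_meas s).aestronglyMeasurable ?_
  filter_upwards [ae_restrict_mem hkc.measurableSet] with u hu
  exact hC u (hk hu)

open Asymptotics Filter Topology in
lemma gF_deriv (s : ℂ) (hs : 1 / 2 < s.re) :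
    HasDerivAt (mellin (gF s)) (mellin (fun t => Real.log t • gF s t) 1) 1 := by
  refine (mellin_hasDerivAt_of_isBigO_rpow (a := 2 * s.re) (b := 2 * (1/4)) (gF_locInt s (by linarith))
    ?_ (by simp; linarith) ?_ (by simp; norm_num)).2
  · obtain ⟨C, hC⟩ := gF_bound s s.re le_rfl (by linarith)
    refine IsBigO.of_bound C ?_
    filter_upwards [eventually_gt_atTop 0] with u hu
    rw [Real.norm_of_nonneg (by positivity)]
    exact hC u hu
  · obtain ⟨C, hC⟩ := gF_bound s (1/4) (by linarith) (by norm_num)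
    refine IsBigO.of_bound C ?_
    filter_upwards [self_mem_nhdsWithin] with u (hu : 0 < u)
    rw [Real.norm_of_nonneg (by positivity)]
    exact hC u hu

lemma beta_prime (s z : ℂ) :
    mellin (fun v : ℝ => (1 + (v : ℂ)) ^ (-s)) z = Complex.betaIntegral z (s - z) := by
  rw [beta_Ioo]
  have himg : (fun x : ℝ => x / (1 - x)) '' Set.Ioo 0 1 = Set.Ioi 0 := by
    ext v
    constructor
    · rintro ⟨x, hx, rfl⟩
      have : 0 < 1 - x := by linarith [hx.2]
      exact div_pos hx.1 this
    · intro hv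
      have hv : 0 < v := hv
      refine ⟨v / (1 + v), ⟨by positivity, by rw [div_lt_one (by positivity)]; linarith⟩, ?_⟩
      have : 1 + v ≠ 0 := by positivity
      field_simp
      ring_nf
  have hinj : Set.InjOn (fun x : ℝ => x / (1 - x)) (Set.Ioo 0 1) := by
    intro x hx y hy h
    have h1 : 1 - x ≠ 0 := by linarith [hx.2]
    have h2 : 1 - y ≠ 0 := by linarith [hy.2]
    simp only at h
    rw [div_eq_div_iff h1 h2] at h
    linarith
  have hd : ∀ x ∈ Set.Ioo (0:ℝ) 1, HasDerivWithinAt (fun x : ℝ => x / (1 - x)) (1 / (1 - x) ^ 2)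
      (Set.Ioo 0 1) x := by
    intro x hx
    have h1 : 1 - x ≠ 0 := by linarith [hx.2]
    have := (hasDerivAt_id x).div ((hasDerivAt_const x (1:ℝ)).sub (hasDerivAt_id x)) h1
    refine (this.congr_deriv ?_).hasDerivWithinAt
    simp
  have := integral_image_eq_integral_abs_deriv_smul measurableSet_Ioo hd hinj
    (fun v : ℝ => (v : ℂ) ^ (z - 1) • (1 + (v : ℂ)) ^ (-s))
  rw [himg] at this
  rw [mellin, this]
  refine setIntegral_congr_fun measurableSet_Ioo fun x hx => ?_
  have h1 : 0 < 1 - x := by linarith [hx.2]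
  have h1c : ((1 - x : ℝ) : ℂ) ≠ 0 := by exact_mod_cast h1.ne'
  have e1 : (1 : ℂ) + ((x / (1 - x) : ℝ) : ℂ) = (((1 - x)⁻¹ : ℝ) : ℂ) := by
    norm_cast
    field_simp
    ring
  have e2 : (1 : ℂ) - (x : ℂ) = ((1 - x : ℝ) : ℂ) := by push_cast; ring
  simp only [e1, e2, smul_eq_mul]
  rw [abs_of_pos (by positivity), div_eq_mul_inv x, Complex.ofReal_mul,
    Complex.mul_cpow_ofReal_nonneg hx.1.le (by positivity)]
  have e3 : ∀ w : ℂ, (((1 - x)⁻¹ : ℝ) : ℂ) ^ w = ((1 - x : ℝ) : ℂ) ^ (-w) := by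
    intro w
    rw [Complex.ofReal_inv, Complex.inv_cpow _ _ ?_, Complex.cpow_neg]
    rw [Complex.arg_ofReal_of_nonneg h1.le]
    exact Real.pi_pos.ne
  rw [e3, e3]
  have e4 : s - z - 1 = -(z - 1) + - -s + (-2 : ℤ) := by push_cast; ring
  rw [e4, Complex.cpow_add _ _ h1c, Complex.cpow_add _ _ h1c, Complex.cpow_intCast, Complex.real_smul]
  push_cast
  rw [one_div, zpow_neg]
  norm_cast
  ring

lemma inner_int (s w : ℂ) (a : ℝ) (ha : 0 < a) :
    ∫ u in Set.Ioi (0:ℝ), (u : ℂ) ^ (w - 1) * (((a + u ^ 2 : ℝ) : ℂ)) ^ (-s) =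
      (a : ℂ) ^ (w / 2 - s) * (1 / 2 * Complex.betaIntegral (w / 2) (s - w / 2)) := by
  have h1 := mellin_comp_rpow (fun v : ℝ => (1 + ((a⁻¹ * v : ℝ) : ℂ)) ^ (-s)) w 2
  have h2 := mellin_comp_mul_left (fun v : ℝ => (1 + (v : ℂ)) ^ (-s)) (w / 2) (inv_pos.2 ha)
  rw [beta_prime] at h2
  simp only [Complex.ofReal_ofNat] at h1
  rw [h2] at h1
  have hac : (a : ℂ) ≠ 0 := by exact_mod_cast ha.ne'
  have h3 : ∫ u in Set.Ioi (0:ℝ), (u : ℂ) ^ (w - 1) * (((a + u ^ 2 : ℝ) : ℂ)) ^ (-s) =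
      (a : ℂ) ^ (-s) * mellin (fun t : ℝ => (1 + ((a⁻¹ * t ^ (2:ℝ) : ℝ) : ℂ)) ^ (-s)) w := by
    rw [mellin, ← integral_const_mul]
    refine setIntegral_congr_fun measurableSet_Ioi fun u hu => ?_
    have e1 : (1 + ((a⁻¹ * u ^ (2:ℝ) : ℝ) : ℂ)) = ((1 + a⁻¹ * u ^ 2 : ℝ) : ℂ) := by
      push_cast [← Real.rpow_natCast]; simp
    have e2 : a + u ^ 2 = a * (1 + a⁻¹ * u ^ 2) := by field_simp
    simp only [smul_eq_mul]
    rw [e1, e2, Complex.ofReal_mul, Complex.mul_cpow_ofReal_nonneg ha.le (by positivity)]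
    ring
  rw [h3, h1]
  have e3 : ((a⁻¹ : ℝ) : ℂ) ^ (-(w / 2)) = (a : ℂ) ^ (w / 2) := by
    rw [Complex.ofReal_inv, Complex.inv_cpow _ _ ?_, Complex.cpow_neg, inv_inv]
    rw [Complex.arg_ofReal_of_nonneg ha.le]
    exact Real.pi_pos.ne
  rw [e3, sub_eq_add_neg (w / 2) s, Complex.cpow_add _ _ hac]
  simp [Complex.real_smul]
  ring

lemma gF_mellin (s w : ℂ) (hs : 1 / 2 < s.re) (hw : 1 / 2 < w.re) (hw2 : w.re < 2 * s.re) :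
    mellin (gF s) w = 1 / 2 * Complex.betaIntegral (w / 2) (s - w / 2)
      * Complex.betaIntegral s (w / 2) := by
  have hint : Integrable (Function.uncurry fun u t : ℝ => (u : ℂ) ^ (w - 1) * gK s u t)
      ((volume.restrict (Set.Ioi 0)).prod (volume.restrict (Set.Ioo (0:ℝ) 1))) := by
    have hk := k_integrable s.re (1/4) (by linarith) (by norm_num)
    let h : ℝ → ℝ := fun u => if u ≤ 1 then u ^ (w.re - 1 - 1/2) else u ^ (w.re - 1 - 2 * s.re)
    have hh : IntegrableOn h (Set.Ioi 0) := by
      rw [← Set.Ioc_union_Ioi_eq_Ioi (zero_le_one (α := ℝ))]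
      refine IntegrableOn.union ?_ ?_
      · have : IntegrableOn (fun u : ℝ => u ^ (w.re - 1 - 1/2)) (Set.Ioc 0 1) := by
          rw [← intervalIntegrable_iff_integrableOn_Ioc_of_le zero_le_one]
          exact intervalIntegral.intervalIntegrable_rpow' (by linarith)
        refine this.congr_fun ?_ measurableSet_Ioc
        intro u hu
        simp [h, hu.2]
      · have : IntegrableOn (fun u : ℝ => u ^ (w.re - 1 - 2 * s.re)) (Set.Ioi 1) :=
          integrableOn_Ioi_rpow_of_lt (by linarith) one_pos
        refine this.congr_fun ?_ measurableSet_Ioi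
        intro u hu
        have : ¬ u ≤ 1 := not_le.2 hu
        simp [h, this]
    refine Integrable.mono' (Integrable.mul_prod hh hk) ?_ ?_
    · refine Measurable.aestronglyMeasurable ?_
      have := gK_meas s
      have h2 : Measurable (fun p : ℝ × ℝ => (p.1 : ℂ) ^ (w - 1)) := by fun_prop
      exact h2.mul this
    · rw [Measure.prod_restrict]
      filter_upwards [ae_restrict_mem (measurableSet_Ioi.prod measurableSet_Ioo)] with p hp
      obtain ⟨u, t⟩ := p
      obtain ⟨hu, ht⟩ := hp
      simp only at hu ht
      have hu : 0 < u := hu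
      have h1 : 0 < 1 - t := by linarith [ht.2]
      simp only [Function.uncurry, norm_mul]
      rw [Complex.norm_cpow_eq_rpow_re_of_pos hu]
      simp only [Complex.sub_re, Complex.one_re, h]
      have ht0 := ht.1
      split_ifs with hu1
      · rw [Real.rpow_sub hu (w.re - 1) (1/2), div_eq_mul_inv, ← Real.rpow_neg hu.le, mul_assoc]
        gcongr
        have hb := gK_norm_le s (1/4) (by linarith) u t hu (by norm_num) ht
        rw [show -(2 * (1 / 4 : ℝ)) = -(1 / 2) by norm_num] at hb
        exact hb
      · rw [Real.rpow_sub hu (w.re - 1) (2 * s.re), div_eq_mul_inv, ← Real.rpow_neg hu.le, mul_assoc]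
        gcongr
        refine (gK_norm_le s s.re le_rfl u t hu (by linarith) ht).trans ?_
        have : (1 - t) ^ (s.re - 1) ≤ (1 - t) ^ ((1:ℝ)/4 - 1) :=
          Real.rpow_le_rpow_of_exponent_ge h1 (by linarith) (by linarith)
        gcongr
  have hsw := integral_integral_swap hint
  have h1 : mellin (gF s) w = ∫ u in Set.Ioi (0:ℝ), ∫ t in Set.Ioo (0:ℝ) 1,
      (u : ℂ) ^ (w - 1) * gK s u t := by
    rw [mellin]
    refine integral_congr_ae (Filter.Eventually.of_forall fun u => ?_)
    simp only [gF, smul_eq_mul]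
    rw [integral_const_mul]
  rw [h1, hsw, beta_Ioo s, ← integral_const_mul]
  refine setIntegral_congr_fun measurableSet_Ioo fun t ht => ?_
  have ht1 : 0 < 1 - t := by linarith [ht.2]
  have htc : ((1 - t : ℝ) : ℂ) ≠ 0 := by exact_mod_cast ht1.ne'
  have e2 : (1 : ℂ) - (t : ℂ) = ((1 - t : ℝ) : ℂ) := by push_cast; ring
  have h2 : ∀ u : ℝ, (u : ℂ) ^ (w - 1) * gK s u t = ((t : ℂ) ^ (s - 1) * (1 - (t : ℂ)) ^ (s - 1)) *
      ((u : ℂ) ^ (w - 1) * (((1 - t + u ^ 2 : ℝ) : ℂ)) ^ (-s)) := by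
    intro u
    rw [gK, ← Complex.ofReal_sub (1 + u ^ 2) t, show 1 + u ^ 2 - t = 1 - t + u ^ 2 by ring]
    ring
  simp only [h2]
  rw [integral_const_mul, inner_int s w _ ht1, e2,
    show w / 2 - 1 = (s - 1) + (w / 2 - s) by ring, Complex.cpow_add _ _ htc]
  ring

/-- For `Re s > 1/2`,
`4(2s-1) ∫₀^∞ g_s(1+u²) log u du = -γ - log 4 - Ψ(s+1/2) + 1/(2s-1)`,
where `γ` is the Euler–Mascheroni constant and `Ψ` the digamma function. -/
theorem integral_greenH_mul_log (s : ℂ) (hs : 1 / 2 < s.re) :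
    4 * (2 * s - 1) * ∫ u in Set.Ioi (0:ℝ), greenH s (1 + u ^ 2) * (Real.log u : ℂ) =
      -(Real.eulerMascheroniConstant : ℂ) - (Real.log 4 : ℂ) - digamma (s + 1 / 2)
        + 1 / (2 * s - 1) := by
  have hint : ∫ u in Set.Ioi (0:ℝ), greenH s (1 + u ^ 2) * (Real.log u : ℂ) =
      1 / (4 * (Real.pi : ℂ)) * mellin (fun t => Real.log t • gF s t) 1 := by
    rw [mellin, ← integral_const_mul]
    refine integral_congr_ae (Filter.Eventually.of_forall fun u => ?_)
    simp only [greenH, gF, gK, sub_self, Complex.cpow_zero, one_smul, Complex.real_smul]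
    ring
  have hGd : ∀ z : ℂ, 0 < z.re → HasDerivAt Complex.Gamma (Complex.digamma z * Complex.Gamma z) z := by
    intro z hz
    have hd : DifferentiableAt ℂ Complex.Gamma z := by
      refine Complex.differentiableAt_Gamma z fun m h => ?_
      rw [h] at hz
      simp at hz
      linarith [Nat.cast_nonneg (α := ℝ) m]
    refine hd.hasDerivAt.congr_deriv ?_
    rw [Complex.digamma_def, logDeriv_apply, div_mul_cancel₀ _ (Complex.Gamma_ne_zero_of_re_pos hz)]
  have hm : mellin (gF s) =ᶠ[nhds 1] fun w => 1 / 2 * (Complex.Gamma (w / 2) ^ 2 *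
      Complex.Gamma (s - w / 2) / Complex.Gamma (s + w / 2)) := by
    have o1 : ∀ᶠ w : ℂ in nhds 1, 1 / 2 < w.re :=
      Complex.continuous_re.continuousAt.eventually_const_lt (by norm_num)
    have o2 : ∀ᶠ w : ℂ in nhds 1, w.re < 2 * s.re :=
      Complex.continuous_re.continuousAt.eventually_lt_const (by simp; linarith)
    filter_upwards [o1, o2] with w h1 h2
    have hwr : (w / 2).re = w.re / 2 := by simp
    rw [gF_mellin s w hs h1 h2, Complex.betaIntegral_eq_Gamma_mul_div _ _ (by rw [hwr]; linarith)
      (by rw [Complex.sub_re, hwr]; linarith),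
      Complex.betaIntegral_eq_Gamma_mul_div _ _ (by linarith) (by rw [hwr]; linarith)]
    have g1 : Complex.Gamma s ≠ 0 := Complex.Gamma_ne_zero_of_re_pos (by linarith)
    have g2 : Complex.Gamma (s + w / 2) ≠ 0 :=
      Complex.Gamma_ne_zero_of_re_pos (by rw [Complex.add_re, hwr]; linarith)
    rw [show w / 2 + (s - w / 2) = s by ring]
    field_simp
  have hd1 := (gF_deriv s hs).congr_of_eventuallyEq hm.symm
  have r1 : 0 < (s - 1 / 2).re := by simp; linarith
  have r2 : 0 < (s + 1 / 2).re := by simp; linarith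
  have hhalf : HasDerivAt (fun w : ℂ => w / 2) (1 / 2) 1 := (hasDerivAt_id (1:ℂ)).div_const 2
  have d1 := (hGd (1 / 2) (by norm_num)).comp (1:ℂ) hhalf
  have d2 := (hGd (s - 1 / 2) r1).comp (1:ℂ) (hhalf.const_sub s)
  have d3 := (hGd (s + 1 / 2) r2).comp (1:ℂ) (hhalf.const_add s)
  have g2 : Complex.Gamma (s + 1 / 2) ≠ 0 := Complex.Gamma_ne_zero_of_re_pos r2
  have g3 : Complex.Gamma (s - 1 / 2) ≠ 0 := Complex.Gamma_ne_zero_of_re_pos r1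
  have hd2 := (((d1.pow 2).mul d2).div d3 g2).const_mul (1 / 2 : ℂ)
  have key := hd1.unique hd2
  have hs0 : s - 1 / 2 ≠ 0 := fun h => by rw [h] at r1; simp at r1
  have hs1 : 2 * s - 1 ≠ 0 := fun h => hs0 (by linear_combination h / 2)
  have hG : Complex.Gamma (s + 1 / 2) = (s - 1 / 2) * Complex.Gamma (s - 1 / 2) := by
    rw [← Complex.Gamma_add_one _ hs0]; congr 1; ring
  have hdg : Complex.digamma (s + 1 / 2) = Complex.digamma (s - 1 / 2) + (s - 1 / 2)⁻¹ := by
    rw [← Complex.digamma_apply_add_one]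
    · congr 1; ring
    · intro m h
      rw [h] at r1
      simp at r1
      linarith [Nat.cast_nonneg (α := ℝ) m]
  have hpi : Complex.Gamma (1 / 2) ^ 2 = (Real.pi : ℂ) := by
    rw [Complex.Gamma_one_half_eq, ← Complex.cpow_nat_mul]; simp
  have hlog : (Real.log 4 : ℂ) = 2 * Complex.log 2 := by
    rw [show (4:ℝ) = 2 ^ 2 by norm_num, Real.log_pow]; push_cast; simp
  have hdd : digamma (s + 1 / 2) = Complex.digamma (s + 1 / 2) := by
    rw [Complex.digamma_def, logDeriv_apply, digamma]
  have hpi0 : (Real.pi : ℂ) ≠ 0 := by exact_mod_cast Real.pi_ne_zero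
  have key2 : mellin (fun t => Real.log t • gF s t) 1 = Real.pi / (2 * s - 1) *
      (Complex.digamma (1 / 2) - Complex.digamma (s - 1 / 2) / 2
        - Complex.digamma (s + 1 / 2) / 2) := by
    rw [key]
    simp only [Function.comp, Pi.pow_apply, Pi.mul_apply]
    have hpi' : Complex.Gamma (1 / 2) ^ 2 = (Real.pi : ℂ) := hpi
    rw [hG, ← hpi]
    generalize Complex.digamma (s - 1 / 2) = A
    generalize Complex.digamma (s + 1 / 2) = B
    generalize Complex.Gamma (s - 1 / 2) = G at g3 ⊢
    generalize Complex.Gamma (1 / 2) = H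
    generalize Complex.digamma (1 / 2) = D
    have hs2 : s - 1 / 2 = (2 * s - 1) / 2 := by ring
    rw [hs2]
    field_simp
    ring
  rw [hint, key2, hdd, hlog, Complex.digamma_one_half, hdg]
  have : (s - 1 / 2)⁻¹ = 2 / (2 * s - 1) := by field_simp
  rw [this]
  field_simp
  ring
end

section
/- Let s be a complex number with Re(s) > 1/2. Then ((2s−1)/(4π)) ∫₀¹ ∫₀¹ t^{s−1} (1−t)^{−1/2} w^{s−3/2} (1−w)^{−1/2} log( (1−t)(1−w)/w ) dw dt = −γ − log 4 − Ψ(s + 1/2) + 1/(2s−1). -/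
open MeasureTheory

open Complex in
lemma bt_int {u v : ℂ} (hu : 0 < u.re) (hv : 0 < v.re) :
    IntegrableOn (fun x : ℝ => (x : ℂ) ^ (u - 1) * ((1 - x : ℝ) : ℂ) ^ (v - 1)) (Set.Ioo 0 1) := by
  have h := betaIntegral_convergent hu hv
  rw [intervalIntegrable_iff_integrableOn_Ioo_of_le zero_le_one] at h
  simpa using h

open Complex in
lemma bt_val (u v : ℂ) :
    ∫ x in Set.Ioo (0:ℝ) 1, (x : ℂ) ^ (u - 1) * ((1 - x : ℝ) : ℂ) ^ (v - 1) = betaIntegral u v := by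
  rw [betaIntegral, intervalIntegral.integral_of_le zero_le_one, integral_Ioc_eq_integral_Ioo]
  simp

open Complex Filter Topology Asymptotics in
lemma bt_mellin {u v : ℂ} (hu : 0 < u.re) (hv : 0 < v.re) :
    IntegrableOn (fun x : ℝ => (x : ℂ) ^ (u - 1) * ((1 - x : ℝ) : ℂ) ^ (v - 1) * (Real.log x : ℂ))
      (Set.Ioo 0 1) ∧
    HasDerivAt (fun z => betaIntegral z v) (∫ x in Set.Ioo (0:ℝ) 1,
      (x : ℂ) ^ (u - 1) * ((1 - x : ℝ) : ℂ) ^ (v - 1) * (Real.log x : ℂ)) u := by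
  set f : ℝ → ℂ := (Set.Ioo (0:ℝ) 1).indicator (fun x => ((1 - x : ℝ) : ℂ) ^ (v - 1)) with hf
  have hfi : Integrable f := by
    rw [hf, integrable_indicator_iff measurableSet_Ioo]
    simpa using bt_int (u := 1) (by simp) hv
  have htop : f =O[atTop] (fun x : ℝ => x ^ (-(u.re + 1))) := by
    have : f =ᶠ[atTop] (fun _ => (0:ℂ)) := by
      filter_upwards [eventually_ge_atTop (1:ℝ)] with x hx
      rw [hf, Set.indicator_of_notMem]
      simp [hx]
    exact this.trans_isBigO (isBigO_zero _ _)
  have hbot : f =O[𝓝[>] 0] (fun x : ℝ => x ^ (-(0:ℝ))) := by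
    have h1 : (fun x : ℝ => ((1 - x : ℝ) : ℂ) ^ (v - 1)) =O[𝓝[>] 0] (fun x : ℝ => (1:ℝ)) := by
      have : ContinuousAt (fun x : ℝ => ((1 - x : ℝ) : ℂ) ^ (v - 1)) 0 := by
        apply ContinuousAt.cpow (by fun_prop) (by fun_prop)
        simp
      exact (this.tendsto.isBigO_one ℝ).mono nhdsWithin_le_nhds
    simp only [neg_zero, Real.rpow_zero]
    refine (IsBigO.of_bound 1 (Eventually.of_forall fun x => ?_)).trans h1
    rw [one_mul]
    exact norm_indicator_le_norm_self _ _
  have key := mellin_hasDerivAt_of_isBigO_rpow (s := u)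
    (hfi.locallyIntegrable.locallyIntegrableOn _) htop (by linarith) hbot hu
  have hg : ∀ (z : ℂ) (g : ℝ → ℂ), (fun t : ℝ => (t:ℂ) ^ (z - 1) • (g t • f t)) =
      (Set.Ioo (0:ℝ) 1).indicator
        (fun x => (x : ℂ) ^ (z - 1) * ((1 - x : ℝ) : ℂ) ^ (v - 1) * g x) := by
    intro z g
    ext x
    by_cases hx : x ∈ Set.Ioo (0:ℝ) 1
    · simp [hf, Set.indicator_of_mem hx]; ring
    · simp [hf, Set.indicator_of_notMem hx]
  have hI : Set.Ioo (0:ℝ) 1 ∩ Set.Ioi 0 = Set.Ioo (0:ℝ) 1 := by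
    ext x; simp; intro h _; exact h
  have hI' : Set.Ioi 0 ∩ Set.Ioo (0:ℝ) 1 = Set.Ioo (0:ℝ) 1 := by rw [Set.inter_comm, hI]
  constructor
  · have h1 := key.1
    have h2 := hg u (fun x => (Real.log x : ℂ))
    unfold MellinConvergent at h1
    simp only [Complex.real_smul] at h1
    simp only [smul_eq_mul] at h1 h2
    rw [h2, integrableOn_indicator_iff measurableSet_Ioo, hI] at h1
    exact h1
  · have h1 := key.2
    have h3 : mellin f = fun z => betaIntegral z v := by
      ext z
      have h2 := hg z 1
      simp only [Pi.one_apply, one_smul, mul_one] at h2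
      rw [mellin, h2, setIntegral_indicator measurableSet_Ioo, hI', bt_val]
    have h2 := hg u (fun x => (Real.log x : ℂ))
    rw [h3, mellin] at h1
    simp only [Complex.real_smul] at h1
    simp only [smul_eq_mul] at h1 h2
    rw [h2, setIntegral_indicator measurableSet_Ioo, hI'] at h1
    exact h1

lemma bt_deriv {u v : ℂ} (hu : 0 < u.re) (hv : 0 < v.re) :
    ∫ x in Set.Ioo (0:ℝ) 1,
      (x : ℂ) ^ (u - 1) * ((1 - x : ℝ) : ℂ) ^ (v - 1) * (Real.log x : ℂ) =
    Complex.betaIntegral u v * (digamma u - digamma (u + v)) := by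
  have hne : ∀ z : ℂ, 0 < z.re → ∀ m : ℕ, z ≠ -m := by
    intro z hz m h
    rw [h] at hz
    simp at hz
    have : (0:ℝ) ≤ m := Nat.cast_nonneg m
    linarith
  have huv : 0 < (u + v).re := by simp; linarith
  have h1 := (Complex.differentiableAt_Gamma u (hne u hu)).hasDerivAt
  have h2 := (Complex.differentiableAt_Gamma (u + v) (hne _ huv)).hasDerivAt
  have h2' : HasDerivAt (fun z => Complex.Gamma (z + v)) (deriv Complex.Gamma (u + v)) u :=
    h2.comp_add_const u v
  have g1 := Complex.Gamma_ne_zero_of_re_pos hu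
  have g2 := Complex.Gamma_ne_zero_of_re_pos huv
  have h3 := (h1.mul_const (Complex.Gamma v)).div h2' g2
  have h4 := (bt_mellin hu hv).2
  have hev : (fun z => Complex.betaIntegral z v) =ᶠ[nhds u]
      (fun z => Complex.Gamma z * Complex.Gamma v / Complex.Gamma (z + v)) := by
    have : ∀ᶠ z : ℂ in nhds u, 0 < z.re :=
      (isOpen_lt continuous_const Complex.continuous_re).mem_nhds hu
    filter_upwards [this] with z hz
    exact Complex.betaIntegral_eq_Gamma_mul_div z v hz hv
  have h5 := h4.unique (h3.congr_of_eventuallyEq hev)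
  rw [h5, Complex.betaIntegral_eq_Gamma_mul_div u v hu hv, digamma, digamma]
  field_simp

lemma bt_swap {u v : ℂ} (hu : 0 < u.re) (hv : 0 < v.re) :
    IntegrableOn (fun x : ℝ => (x : ℂ) ^ (u - 1) * ((1 - x : ℝ) : ℂ) ^ (v - 1) *
      (Real.log (1 - x) : ℂ)) (Set.Ioo 0 1) ∧
    ∫ x in Set.Ioo (0:ℝ) 1,
      (x : ℂ) ^ (u - 1) * ((1 - x : ℝ) : ℂ) ^ (v - 1) * (Real.log (1 - x) : ℂ) =
    Complex.betaIntegral u v * (digamma v - digamma (u + v)) := by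
  have a := (bt_mellin hv hu).1
  have b := bt_deriv hv hu
  have he : (fun x : ℝ => (x : ℂ) ^ (u - 1) * ((1 - x : ℝ) : ℂ) ^ (v - 1) *
      (Real.log (1 - x) : ℂ)) = fun x : ℝ => (fun y : ℝ => (y : ℂ) ^ (v - 1) *
        ((1 - y : ℝ) : ℂ) ^ (u - 1) * (Real.log y : ℂ)) (1 - x) := by
    ext x
    simp only [sub_sub_cancel]
    ring
  rw [← intervalIntegrable_iff_integrableOn_Ioo_of_le zero_le_one] at a ⊢
  rw [← integral_Ioc_eq_integral_Ioo, ← intervalIntegral.integral_of_le zero_le_one] at b ⊢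
  rw [he]
  constructor
  · have := a.comp_sub_left 1
    simpa using this.symm
  · rw [intervalIntegral.integral_comp_sub_left (fun y : ℝ => (y : ℂ) ^ (v - 1) *
        ((1 - y : ℝ) : ℂ) ^ (u - 1) * (Real.log y : ℂ)) 1]
    rw [sub_self, sub_zero, b, Complex.betaIntegral_symm, add_comm v u]

/-- The Beta-type double integral from the proof of Proposition 2.4 of the paper:
for `Re s > 1/2`,
`((2s-1)/(4π)) ∫₀¹∫₀¹ t^(s-1) (1-t)^(-1/2) w^(s-3/2) (1-w)^(-1/2) log((1-t)(1-w)/w) dw dt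
  = -γ - log 4 - Ψ(s+1/2) + 1/(2s-1)`. -/
theorem beta_type_double_integral (s : ℂ) (hs : 1 / 2 < s.re) :
    (2 * s - 1) / (4 * (Real.pi : ℂ)) *
      ∫ t in Set.Ioo (0:ℝ) 1, ∫ w in Set.Ioo (0:ℝ) 1,
        (t : ℂ) ^ (s - 1) * ((1 - t : ℝ) : ℂ) ^ (-(1/2) : ℂ) *
          (w : ℂ) ^ (s - 3/2) * ((1 - w : ℝ) : ℂ) ^ (-(1/2) : ℂ) *
          (Real.log ((1 - t) * (1 - w) / w) : ℂ) =
      -(Real.eulerMascheroniConstant : ℂ) - (Real.log 4 : ℂ) - digamma (s + 1 / 2)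
        + 1 / (2 * s - 1) := by
  have e1 : (-(1/2) : ℂ) = 1/2 - 1 := by norm_num
  have e2 : s - 3/2 = (s - 1/2) - 1 := by ring
  rw [e1, e2]
  have hh : 0 < (1/2 : ℂ).re := by norm_num
  have hs0 : 0 < s.re := by linarith
  have hs1 : 0 < (s - 1/2).re := by
    have : (s - 1/2).re = s.re - 1/2 := by simp
    rw [this]; linarith
  have hs2 : 0 < (s + 1/2).re := by
    have : (s + 1/2).re = s.re + 1/2 := by simp
    rw [this]; linarith
  have inner : ∀ t ∈ Set.Ioo (0:ℝ) 1, (∫ w in Set.Ioo (0:ℝ) 1,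
        (t : ℂ) ^ (s - 1) * ((1 - t : ℝ) : ℂ) ^ (1/2 - 1 : ℂ) *
          (w : ℂ) ^ (s - 1/2 - 1) * ((1 - w : ℝ) : ℂ) ^ (1/2 - 1 : ℂ) *
          (Real.log ((1 - t) * (1 - w) / w) : ℂ)) =
      Complex.betaIntegral (s - 1/2) (1/2) *
        ((t : ℂ) ^ (s - 1) * ((1 - t : ℝ) : ℂ) ^ (1/2 - 1 : ℂ) * (Real.log (1 - t) : ℂ)) +
      (Complex.betaIntegral (s - 1/2) (1/2) * (digamma (1/2) - digamma (s - 1/2))) *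
        ((t : ℂ) ^ (s - 1) * ((1 - t : ℝ) : ℂ) ^ (1/2 - 1 : ℂ)) := by
    intro t ht
    set F : ℂ := (t : ℂ) ^ (s - 1) * ((1 - t : ℝ) : ℂ) ^ (1/2 - 1 : ℂ) with hF
    have i1 := bt_int hs1 hh
    have i2 := (bt_swap hs1 hh).1
    have i3 := (bt_mellin hs1 hh).1
    have v1 := bt_val (s - 1/2) (1/2)
    have v2 := (bt_swap hs1 hh).2
    have v3 := bt_deriv hs1 hh
    have hc : ∀ w ∈ Set.Ioo (0:ℝ) 1, F *
          (w : ℂ) ^ (s - 1/2 - 1) * ((1 - w : ℝ) : ℂ) ^ (1/2 - 1 : ℂ) *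
          (Real.log ((1 - t) * (1 - w) / w) : ℂ) =
        (F * Real.log (1 - t)) * ((w : ℂ) ^ (s - 1/2 - 1) * ((1 - w : ℝ) : ℂ) ^ (1/2 - 1 : ℂ)) +
        F * ((w : ℂ) ^ (s - 1/2 - 1) * ((1 - w : ℝ) : ℂ) ^ (1/2 - 1 : ℂ) *
          (Real.log (1 - w) : ℂ)) -
        F * ((w : ℂ) ^ (s - 1/2 - 1) * ((1 - w : ℝ) : ℂ) ^ (1/2 - 1 : ℂ) *
          (Real.log w : ℂ)) := by
      intro w hw
      have a1 : (1 - t) ≠ 0 := by have := ht.2; linarith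
      have a2 : (1 - w) ≠ 0 := by have := hw.2; linarith
      have a3 : w ≠ 0 := hw.1.ne'
      rw [Real.log_div (mul_ne_zero a1 a2) a3, Real.log_mul a1 a2]
      simp only [Complex.ofReal_sub (_ + _), Complex.ofReal_add]
      ring
    rw [setIntegral_congr_fun measurableSet_Ioo hc]
    rw [integral_sub, integral_add, integral_const_mul, integral_const_mul, integral_const_mul,
      v1, v2, v3]
    · ring
    · exact i1.const_mul _
    · exact i2.const_mul _
    · exact (i1.const_mul _).add (i2.const_mul _)
    · exact i3.const_mul _
  rw [setIntegral_congr_fun measurableSet_Ioo inner, integral_add, integral_const_mul,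
    integral_const_mul, bt_val, (bt_swap hs0 hh).2]
  rotate_left
  · exact (bt_swap hs0 hh).1.const_mul _
  · exact (bt_int hs0 hh).const_mul _
  have hd : digamma (s + 1/2) = digamma (s - 1/2) + (s - 1/2)⁻¹ := by
    have := Complex.digamma_apply_add_one (s - 1/2) (by
      intro m h
      rw [h] at hs1
      simp at hs1
      have : (0:ℝ) ≤ m := Nat.cast_nonneg m
      linarith)
    have e : s - 1/2 + 1 = s + 1/2 := by ring
    rw [e] at this
    exact this
  have hhalf : digamma (1/2) = -(Real.eulerMascheroniConstant : ℂ) - (Real.log 4 : ℂ) := by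
    have h := Complex.digamma_one_half
    have h4 : Real.log 4 = 2 * Real.log 2 := by
      rw [show (4:ℝ) = 2 ^ 2 by norm_num, Real.log_pow]; norm_num
    have h2 : Complex.log 2 = (Real.log 2 : ℂ) := by
      rw [Complex.ofReal_log (by norm_num)]; norm_num
    have h' : digamma (1/2) = Complex.digamma (1/2) := rfl
    rw [h', h, h4, h2]
    push_cast
    ring
  have hne : s - 1/2 ≠ 0 := by
    intro h; rw [h] at hs1; simp at hs1
  have hne2 : 2 * s - 1 ≠ 0 := by
    intro h; apply hne; linear_combination h / 2
  have g1 := Complex.Gamma_ne_zero_of_re_pos hs0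
  have g2 := Complex.Gamma_ne_zero_of_re_pos hs1
  have hG : Complex.Gamma (s + 1/2) = (s - 1/2) * Complex.Gamma (s - 1/2) := by
    rw [← Complex.Gamma_add_one _ hne]; congr 1; ring
  have hpi : (Real.pi : ℂ) ≠ 0 := by exact_mod_cast Real.pi_ne_zero
  have hB : Complex.betaIntegral (s - 1/2) (1/2) * Complex.betaIntegral s (1/2) =
      2 * Real.pi / (2 * s - 1) := by
    have hgg : Complex.Gamma (1/2) * Complex.Gamma (1/2) = (Real.pi : ℂ) := by
      have := Complex.Gamma_mul_Gamma_one_sub (1/2)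
      rw [show (1 - 1/2 : ℂ) = 1/2 by norm_num] at this
      rw [this, show (Real.pi : ℂ) * (1/2) = Real.pi / 2 by ring, Complex.sin_pi_div_two, div_one]
    rw [Complex.betaIntegral_eq_Gamma_mul_div _ _ hs1 hh,
      Complex.betaIntegral_eq_Gamma_mul_div _ _ hs0 hh, hG,
      show s - 1/2 + 1/2 = s by ring]
    rw [show 2 * s - 1 = 2 * (s - 1/2) by ring, ← hgg]
    generalize Complex.Gamma (s - 1/2) = G at g2 ⊢
    generalize s - 1/2 = r at hne ⊢
    field_simp
  have hi : (s - 1/2)⁻¹ = 2 * (1 / (2 * s - 1)) := by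
    rw [show 2 * s - 1 = 2 * (s - 1/2) by ring]
    field_simp
  have hk : (2 * s - 1) / (4 * (Real.pi : ℂ)) * (2 * Real.pi / (2 * s - 1)) = 1/2 := by
    field_simp; norm_num
  rw [← hB] at hk
  have hd' : digamma (s - 1/2) = digamma (s + 1/2) - 2 * (1 / (2 * s - 1)) := by
    rw [hd, hi]; ring
  rw [hd', ← hhalf]
  linear_combination (2 * digamma (1/2) - 2 * digamma (s + 1/2) + 2 * (1 / (2 * s - 1))) * hk
end

section
/- Let s be a complex number with Re(s) > 1/2. Then lim_{y→0⁺} y^{−2s} ∑_{k=1}^∞ g_s(1 + k²/(4y²)) = (4^s/(4π)) · (Γ(s)²/Γ(2s)) · ζ(2s), where ζ is the Riemann zeta function and y^{−2s} denotes the principal power of the positive real y. -/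
open MeasureTheory

open Filter Topology in
lemma cusp_inner (s : ℂ) (hs : 1 / 2 < s.re) (c : ℝ) (hc : 0 < c) :
    Tendsto (fun y : ℝ => ∫ t in Set.Ioo (0:ℝ) 1,
      ((t : ℂ) ^ (s - 1) * ((1 : ℂ) - (t : ℂ)) ^ (s - 1)) *
        ((y ^ 2 * (1 - t) + c : ℝ) : ℂ) ^ (-s)) (𝓝[>] 0)
      (𝓝 (∫ t in Set.Ioo (0:ℝ) 1,
        ((t : ℂ) ^ (s - 1) * ((1 : ℂ) - (t : ℂ)) ^ (s - 1)) * (c : ℂ) ^ (-s))) ∧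
    ∀ y : ℝ, ‖∫ t in Set.Ioo (0:ℝ) 1,
      ((t : ℂ) ^ (s - 1) * ((1 : ℂ) - (t : ℂ)) ^ (s - 1)) *
        ((y ^ 2 * (1 - t) + c : ℝ) : ℂ) ^ (-s)‖ ≤
      (∫ t in Set.Ioo (0:ℝ) 1, ‖(t : ℂ) ^ (s - 1) * ((1 : ℂ) - (t : ℂ)) ^ (s - 1)‖) *
        c ^ (-s.re) := by
  have hint : IntegrableOn (fun t : ℝ => (t : ℂ) ^ (s - 1) * ((1 : ℂ) - (t : ℂ)) ^ (s - 1))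
      (Set.Ioo (0:ℝ) 1) := by
    have h := Complex.betaIntegral_convergent (u := s) (v := s) (by linarith) (by linarith)
    rw [intervalIntegrable_iff_integrableOn_Ioo_of_le zero_le_one] at h
    exact h
  have hb : ∀ y : ℝ, ∀ t ∈ Set.Ioo (0:ℝ) 1,
      ‖((t : ℂ) ^ (s - 1) * ((1 : ℂ) - (t : ℂ)) ^ (s - 1)) *
        ((y ^ 2 * (1 - t) + c : ℝ) : ℂ) ^ (-s)‖ ≤
      ‖(t : ℂ) ^ (s - 1) * ((1 : ℂ) - (t : ℂ)) ^ (s - 1)‖ * c ^ (-s.re) := by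
    intro y t ht
    have h0 : 0 ≤ y ^ 2 * (1 - t) := mul_nonneg (sq_nonneg y) (by linarith [ht.2])
    rw [norm_mul]
    refine mul_le_mul_of_nonneg_left ?_ (norm_nonneg _)
    rw [Complex.norm_cpow_eq_rpow_re_of_pos (by linarith), Complex.neg_re]
    exact Real.rpow_le_rpow_of_nonpos hc (by linarith) (by linarith)
  have hbi := hint.norm.mul_const (c ^ (-s.re))
  constructor
  · refine tendsto_integral_filter_of_dominated_convergence
      (fun t : ℝ => ‖(t : ℂ) ^ (s - 1) * ((1 : ℂ) - (t : ℂ)) ^ (s - 1)‖ * c ^ (-s.re))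
      ?_ ?_ hbi ?_
    · refine Eventually.of_forall fun y => hint.aestronglyMeasurable.mul ?_
      apply Measurable.aestronglyMeasurable
      exact Measurable.pow_const (by fun_prop) _
    · exact Eventually.of_forall fun y =>
        (ae_restrict_iff' measurableSet_Ioo).2 (Eventually.of_forall (hb y))
    · refine Eventually.of_forall fun t => ?_
      refine Tendsto.const_mul _ ?_
      have h1 : Tendsto (fun y : ℝ => ((y ^ 2 * (1 - t) + c : ℝ) : ℂ)) (𝓝[>] 0) (𝓝 (c : ℂ)) := by
        have : Continuous (fun y : ℝ => ((y ^ 2 * (1 - t) + c : ℝ) : ℂ)) := by fun_prop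
        have h2 := (this.tendsto 0).mono_left (nhdsWithin_le_nhds (s := Set.Ioi 0))
        simpa using h2
      exact h1.cpow tendsto_const_nhds (Complex.ofReal_mem_slitPlane.2 hc)
  · intro y
    rw [← integral_mul_const]
    exact norm_integral_le_of_norm_le hbi
      ((ae_restrict_iff' measurableSet_Ioo).2 (Eventually.of_forall (hb y)))

lemma greenH_scaled (s : ℂ) (y c : ℝ) (hy : 0 < y) (hc : 0 < c) :
    (y : ℂ) ^ (-(2 * s)) * greenH s (1 + c / y ^ 2) =
      (1 / (4 * (Real.pi : ℂ))) * ∫ t in Set.Ioo (0:ℝ) 1,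
      ((t : ℂ) ^ (s - 1) * ((1 : ℂ) - (t : ℂ)) ^ (s - 1)) *
        ((y ^ 2 * (1 - t) + c : ℝ) : ℂ) ^ (-s) := by
  unfold greenH
  rw [mul_left_comm, ← integral_const_mul]
  congr 1
  refine setIntegral_congr_fun measurableSet_Ioo fun t ht => ?_
  have hq : 0 < c / y ^ 2 := by positivity
  have e1 : (y : ℂ) ^ (-(2 * s)) = ((y ^ 2 : ℝ) : ℂ) ^ (-s) := by
    rw [sq, Complex.ofReal_mul, Complex.mul_cpow_ofReal_nonneg hy.le hy.le,
      ← Complex.cpow_add _ _ (by exact_mod_cast hy.ne')]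
    congr 1; ring
  have e2 : ((y ^ 2 * (1 - t) + c : ℝ) : ℂ) ^ (-s) =
      ((y ^ 2 : ℝ) : ℂ) ^ (-s) * (((1 + c / y ^ 2 : ℝ) : ℂ) - (t : ℂ)) ^ (-s) := by
    rw [← Complex.ofReal_sub,
      ← Complex.mul_cpow_ofReal_nonneg (by positivity) (by linarith [ht.2]),
      ← Complex.ofReal_mul]
    congr 2
    field_simp
    ring
  simp only [e1, e2]
  ring

/-- Lemma A.3 of the paper (cusp asymptotics): for `Re s > 1/2`,
`lim_{y→0⁺} y^(-2s) ∑_{k=1}^∞ g_s(1 + k²/(4y²)) = (4^s/(4π)) (Γ(s)²/Γ(2s)) ζ(2s)`. -/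
theorem cusp_asymptotic (s : ℂ) (hs : 1 / 2 < s.re) :
    Filter.Tendsto
      (fun y : ℝ => ((y : ℂ) ^ (-(2 * s))) *
        ∑' k : ℕ, greenH s (1 + ((k : ℝ) + 1) ^ 2 / (4 * y ^ 2)))
      (nhdsWithin 0 (Set.Ioi 0))
      (nhds ((4 : ℂ) ^ s / (4 * (Real.pi : ℂ)) * (Complex.Gamma s) ^ 2 /
        Complex.Gamma (2 * s) * riemannZeta (2 * s))) := by
  have hterm : ∀ y : ℝ, 0 < y → ∀ k : ℕ,
      (y : ℂ) ^ (-(2 * s)) * greenH s (1 + ((k : ℝ) + 1) ^ 2 / (4 * y ^ 2)) =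
      (1 / (4 * (Real.pi : ℂ))) * ∫ t in Set.Ioo (0:ℝ) 1,
      ((t : ℂ) ^ (s - 1) * ((1 : ℂ) - (t : ℂ)) ^ (s - 1)) *
        ((y ^ 2 * (1 - t) + ((k : ℝ) + 1) ^ 2 / 4 : ℝ) : ℂ) ^ (-s) := by
    intro y hy k
    rw [← greenH_scaled s y _ hy (by positivity), div_div]
  have hB : ∫ t in Set.Ioo (0:ℝ) 1, (t : ℂ) ^ (s - 1) * ((1 : ℂ) - (t : ℂ)) ^ (s - 1) =
      Complex.Gamma s ^ 2 / Complex.Gamma (2 * s) := by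
    have h := Complex.betaIntegral_eq_Gamma_mul_div s s (by linarith) (by linarith)
    rw [Complex.betaIntegral, intervalIntegral.integral_of_le zero_le_one,
      integral_Ioc_eq_integral_Ioo] at h
    rw [h, sq, two_mul]
  have hpow : ∀ k : ℕ, ((((k : ℝ) + 1) ^ 2 / 4 : ℝ) : ℂ) ^ (-s) =
      (4 : ℂ) ^ s * (1 / ((k : ℂ) + 1) ^ (2 * s)) := by
    intro k
    have hk : (0:ℝ) < (k : ℝ) + 1 := by positivity
    have hk' : ((((k : ℝ) + 1 : ℝ)) : ℂ) ≠ 0 := by exact_mod_cast hk.ne'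
    have e : (((k : ℝ) + 1) ^ 2 / 4 : ℝ) = (((k : ℝ) + 1) * ((k : ℝ) + 1)) * (4⁻¹ : ℝ) := by ring
    rw [e, Complex.ofReal_mul, Complex.mul_cpow_ofReal_nonneg (by positivity) (by positivity),
      Complex.ofReal_mul, Complex.mul_cpow_ofReal_nonneg hk.le hk.le,
      ← Complex.cpow_add _ _ hk', Complex.ofReal_inv, Complex.inv_cpow _ _ (by
        rw [Complex.arg_ofReal_of_nonneg (by norm_num)]; exact Real.pi_pos.ne),
      Complex.cpow_neg _ s, inv_inv, show -s + -s = -(2 * s) by ring, Complex.cpow_neg]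
    push_cast
    ring
  have hlim : (4 : ℂ) ^ s / (4 * (Real.pi : ℂ)) * (Complex.Gamma s) ^ 2 /
        Complex.Gamma (2 * s) * riemannZeta (2 * s) =
      ∑' k : ℕ, (1 / (4 * (Real.pi : ℂ))) * ∫ t in Set.Ioo (0:ℝ) 1,
        ((t : ℂ) ^ (s - 1) * ((1 : ℂ) - (t : ℂ)) ^ (s - 1)) *
          ((((k : ℝ) + 1) ^ 2 / 4 : ℝ) : ℂ) ^ (-s) := by
    rw [zeta_eq_tsum_one_div_nat_add_one_cpow (by simp; linarith), ← tsum_mul_left]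
    refine tsum_congr fun k => ?_
    rw [integral_mul_const, hB, hpow]
    ring
  rw [hlim]
  set A : ℝ := ∫ t in Set.Ioo (0:ℝ) 1, ‖(t : ℂ) ^ (s - 1) * ((1 : ℂ) - (t : ℂ)) ^ (s - 1)‖
  have hsum : Summable fun k : ℕ => ‖(1 / (4 * (Real.pi : ℂ)))‖ *
      (A * (((k : ℝ) + 1) ^ 2 / 4) ^ (-s.re)) := by
    refine Summable.mul_left _ (Summable.mul_left _ ?_)
    have h1 : Summable fun n : ℕ => 1 / (n : ℝ) ^ (2 * s.re) :=
      Real.summable_one_div_nat_rpow.2 (by linarith)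
    have h2 := ((summable_nat_add_iff 1).2 h1).mul_left ((4 : ℝ) ^ s.re)
    refine h2.congr fun k => ?_
    have hk : (0:ℝ) < (k : ℝ) + 1 := by positivity
    rw [Real.div_rpow (by positivity) (by norm_num), ← Real.rpow_natCast, ← Real.rpow_mul hk.le,
      Real.rpow_neg (by norm_num), div_inv_eq_mul]
    push_cast
    rw [show (2:ℝ) * -s.re = -(2 * s.re) by ring, Real.rpow_neg hk.le]
    ring
  have key := tendsto_tsum_of_dominated_convergence (𝓕 := nhdsWithin (0:ℝ) (Set.Ioi 0)) hsum
    (f := fun (y : ℝ) (k : ℕ) => (1 / (4 * (Real.pi : ℂ))) * ∫ t in Set.Ioo (0:ℝ) 1,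
      ((t : ℂ) ^ (s - 1) * ((1 : ℂ) - (t : ℂ)) ^ (s - 1)) *
        ((y ^ 2 * (1 - t) + ((k : ℝ) + 1) ^ 2 / 4 : ℝ) : ℂ) ^ (-s))
    (fun k => ((cusp_inner s hs (((k : ℝ) + 1) ^ 2 / 4) (by positivity)).1.const_mul _))
    (Filter.Eventually.of_forall fun y k => by
      rw [norm_mul]
      exact mul_le_mul_of_nonneg_left
        ((cusp_inner s hs (((k : ℝ) + 1) ^ 2 / 4) (by positivity)).2 y) (norm_nonneg _))
  refine key.congr' ?_
  filter_upwards [self_mem_nhdsWithin] with y hy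
  rw [← tsum_mul_left]
  exact tsum_congr fun k => (hterm y hy k).symm
end
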